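/- arXiv:1412.3753 — 9 statements merged into one kernel-verified Lean document; each statement's English description precedes it below -/
import Mathlib

section
/- Let Q be a nondegenerate quadratic form on a finite-dimensional real vector space V whose dimension is even. Then for every isometry g of Q there exists a unit x of CliffordAlgebra Q which is a finite product of elements ι(w₁) * ⋯ * ι(w_k) with Q(wᵢ) ≠ 0 for each i, such that x * ι(v) * x⁻¹ = ι(g v) for all v ∈ V. In other words, the conjugation homomorphism from the Clifford group (the subgroup of units generated by the invertible elements of ι(V)) to the orthogonal group O(Q) is surjective when dim V is even. -/
open CliffordAlgebra

/-!
Conjugation by an anisotropic vector `ι w` acts on `V` as `-r_w`, where `r_w` is the reflection in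
the hyperplane orthogonal to `w`. Hence the endomorphisms of `V` realized by conjugation with
products of anisotropic vectors form a submonoid `conjMonoid Q` of `Module.End ℝ V` containing all
the `-r_w`.

If `e₁, …, eₙ` is an orthogonal basis, then the product of all the `-r_{eᵢ}` is
`(-1)ⁿ • (-1)`, which is `-1` for even `n`; this is the only use of the parity of the dimension.
So `-1`, and therefore every reflection `r_w`, lies in `conjMonoid Q`.

It remains to know that reflections generate the orthogonal group (the Cartan–Dieudonné theorem
without a bound on the number of reflections). Suppose the isometry `f` fixes `e_j` for `j < i`, and
put `a = eᵢ`, `c = f eᵢ`. Since `Q (a - c) + Q (a + c) = 4 Q a ≠ 0`, either `r_{a-c}` or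
`r_a r_{a+c}` is defined and takes `c` back to `a`; these reflections fix the earlier `e_j`, as `a`
and `c` are orthogonal to them. Composing with `f` gives an isometry fixing one more basis vector.
-/

namespace CliffordConj

open QuadraticMap Module

variable {V : Type*} [AddCommGroup V] [Module ℝ V]

/-- The reflection `v ↦ v - (polar Q w v / Q w) • w` in the hyperplane orthogonal to `w`;
it is the identity when `Q w = 0`. -/
noncomputable def refl (Q : QuadraticForm ℝ V) (w : V) : End ℝ V :=
  LinearMap.id - (Q w)⁻¹ • (Q.polarBilin w).smulRight w

lemma refl_apply (Q : QuadraticForm ℝ V) (w v : V) :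
    refl Q w v = v - ((Q w)⁻¹ * polar Q w v) • w := by
  simp [refl, smul_smul]

lemma map_refl (Q : QuadraticForm ℝ V) (w v : V) : Q (refl Q w v) = Q v := by
  by_cases hw : Q w = 0
  · simp [refl_apply, hw]
  · rw [refl_apply, sub_eq_add_neg, ← neg_smul, QuadraticMap.map_add Q, QuadraticMap.map_smul,
      polar_smul_right, polar_comm Q v w]
    simp only [smul_eq_mul]
    field_simp
    ring

lemma refl_self (Q : QuadraticForm ℝ V) {w : V} (hw : Q w ≠ 0) : refl Q w w = -w := by
  have : (Q w)⁻¹ * polar Q w w = 2 := by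
    rw [polar_self]; simp only [nsmul_eq_mul]; push_cast; field_simp
  rw [refl_apply, this, two_smul]
  abel

lemma refl_of_polar_eq_zero (Q : QuadraticForm ℝ V) {w v : V} (h : polar Q w v = 0) :
    refl Q w v = v := by
  simp [refl_apply, h]

lemma refl_refl (Q : QuadraticForm ℝ V) {w : V} (hw : Q w ≠ 0) (v : V) :
    refl Q w (refl Q w v) = v := by
  conv_lhs => rw [refl_apply Q w v]
  rw [map_sub, map_smul, refl_self Q hw, refl_apply]
  simp

lemma refl_mul_self (Q : QuadraticForm ℝ V) {w : V} (hw : Q w ≠ 0) : refl Q w * refl Q w = 1 :=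
  LinearMap.ext fun v => refl_refl Q hw v

/-- Two vectors of the same length are exchanged by the reflection along their difference. -/
lemma refl_sub (Q : QuadraticForm ℝ V) {a c : V} (hac : Q a = Q c) (h : Q (a - c) ≠ 0) :
    refl Q (a - c) c = a := by
  have h1 : Q (a - c) = Q a + Q c - polar Q a c := by
    rw [sub_eq_add_neg, QuadraticMap.map_add Q, QuadraticMap.map_neg, polar_neg_right]; ring
  have h2 : polar Q (a - c) c = - Q (a - c) := by
    rw [h1, polar_sub_left, polar_self, hac]; simp only [nsmul_eq_mul]; push_cast; ring
  rw [refl_apply, h2, mul_neg, inv_mul_cancel₀ h]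
  simp

lemma map_sub_add_map_add (Q : QuadraticForm ℝ V) (a c : V) :
    Q (a - c) + Q (a + c) = 2 * (Q a + Q c) := by
  rw [sub_eq_add_neg, QuadraticMap.map_add Q a (-c), QuadraticMap.map_add Q a c, QuadraticMap.map_neg,
    polar_neg_right]
  ring

lemma polar_map (Q : QuadraticForm ℝ V) {f : End ℝ V} (hf : ∀ v, Q (f v) = Q v) (v w : V) :
    polar Q (f v) (f w) = polar Q v w := by
  simp only [polar, ← map_add, hf]

section Basis

variable {Q : QuadraticForm ℝ V} {n : ℕ} (b : Basis (Fin n) ℝ V)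

/-- Reflections generate the orthogonal group: a submonoid of `End ℝ V` containing all reflections
contains every isometry. Here this is stated for isometries fixing all basis vectors but the
last `m`, to allow induction on `m`. -/
lemma isometry_mem_of_fix (hb : ∀ i j, i ≠ j → polar Q (b i) (b j) = 0) (hb0 : ∀ i, Q (b i) ≠ 0)
    (G : Submonoid (End ℝ V)) (hG : ∀ w, Q w ≠ 0 → refl Q w ∈ G) (m : ℕ) :
    ∀ i, i + m = n → ∀ f : End ℝ V, (∀ v, Q (f v) = Q v) →
      (∀ j : Fin n, j.1 < i → f (b j) = b j) → f ∈ G := by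
  induction m with
  | zero =>
    intro i hi f _ hfix
    have : f = 1 := b.ext fun j => hfix j (by omega)
    exact this ▸ G.one_mem
  | succ m ih =>
    intro i hi f hf hfix
    set a := b ⟨i, by omega⟩ with ha
    have hQ : Q (f a) = Q a := hf a
    have ha0 : Q a ≠ 0 := hb0 _
    have horth : ∀ j : Fin n, j.1 < i → polar Q a (b j) = 0 := fun j hj =>
      hb _ _ fun h => by subst h; exact lt_irrefl _ hj
    have horth' : ∀ j : Fin n, j.1 < i → polar Q (f a) (b j) = 0 := fun j hj => by
      rw [← horth j hj, ← polar_map Q hf a, hfix j hj]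
    by_cases h : Q (a - f a) = 0
    · have h' : Q (a + f a) ≠ 0 := by
        have := map_sub_add_map_add Q a (f a)
        rw [h, hQ, zero_add] at this
        rw [this]
        intro h0
        exact ha0 (by linarith)
      have key : refl Q a * (refl Q (a + f a) * f) ∈ G := by
        refine ih (i + 1) (by omega) _ (fun v => ?_) fun j hj => ?_
        · simp only [End.mul_apply, map_refl, hf]
        · rcases Nat.lt_succ_iff_lt_or_eq.1 hj with hj | hj
          · simp only [End.mul_apply]
            rw [hfix j hj, refl_of_polar_eq_zero Q (w := a + f a),
              refl_of_polar_eq_zero Q (horth j hj)]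
            rw [polar_add_left, horth j hj, horth' j hj, add_zero]
          · have hja : b j = a := by rw [ha]; congr 1; exact Fin.ext hj
            have h3 : refl Q (a + f a) (f a) = -a := by
              -- `a + f a = f a - (-a)`, and the reflection along it exchanges `f a` and `-a`
              have h4 := refl_sub Q (a := f a) (c := -a) (by rw [hQ, QuadraticMap.map_neg])
                (by rwa [sub_neg_eq_add, add_comm])
              rw [sub_neg_eq_add, add_comm] at h4
              rw [← refl_refl Q h' (-a), h4]
            simp only [End.mul_apply]
            rw [hja, h3, map_neg, refl_self Q ha0, neg_neg]
      have : f = refl Q (a + f a) * (refl Q a * (refl Q a * (refl Q (a + f a) * f))) := by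
        rw [← mul_assoc (refl Q a), refl_mul_self Q ha0, one_mul, ← mul_assoc,
          refl_mul_self Q h', one_mul]
      rw [this]
      exact G.mul_mem (hG _ h') (G.mul_mem (hG _ ha0) key)
    · have key : refl Q (a - f a) * f ∈ G := by
        refine ih (i + 1) (by omega) _ (fun v => ?_) fun j hj => ?_
        · simp only [End.mul_apply, map_refl, hf]
        · rcases Nat.lt_succ_iff_lt_or_eq.1 hj with hj | hj
          · simp only [End.mul_apply]
            rw [hfix j hj, refl_of_polar_eq_zero Q]
            rw [polar_sub_left, horth j hj, horth' j hj, sub_zero]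
          · have hja : b j = a := by rw [ha]; congr 1; exact Fin.ext hj
            simp only [End.mul_apply]
            rw [hja, refl_sub Q hQ.symm h]
      have : f = refl Q (a - f a) * (refl Q (a - f a) * f) := by
        rw [← mul_assoc, refl_mul_self Q h, one_mul]
      rw [this]
      exact G.mul_mem (hG _ h) key

/-- `G` contains the product of the `-r_{b j}` for `j < i`, which acts on the basis by `(-1) ^ (i + 1)` on `b j` with
`j < i` and by `(-1) ^ i` on the others. -/
lemma exists_partial_neg (hb : ∀ i j, i ≠ j → polar Q (b i) (b j) = 0) (hb0 : ∀ i, Q (b i) ≠ 0)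
    (G : Submonoid (End ℝ V)) (hG : ∀ w, Q w ≠ 0 → -refl Q w ∈ G) (i : ℕ) (hi : i ≤ n) :
    ∃ h ∈ G, ∀ j : Fin n, h (b j) = if j.1 < i then (-1 : ℝ) ^ (i + 1) • b j
      else (-1 : ℝ) ^ i • b j := by
  induction i with
  | zero => exact ⟨1, G.one_mem, fun j => by simp⟩
  | succ i ih =>
    obtain ⟨h, hh, hj⟩ := ih (by omega)
    refine ⟨-refl Q (b ⟨i, by omega⟩) * h, G.mul_mem (hG _ (hb0 _)) hh, fun j => ?_⟩
    rw [End.mul_apply, hj, LinearMap.neg_apply]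
    rcases lt_trichotomy j.1 i with h1 | h1 | h1
    · rw [if_pos h1, if_pos (by omega), map_smul,
        refl_of_polar_eq_zero Q (hb _ _ fun h => by subst h; exact lt_irrefl _ h1)]
      rw [pow_succ _ (i + 1)]; simp
    · have : (⟨i, by omega⟩ : Fin n) = j := Fin.ext h1.symm
      rw [if_neg (by omega), if_pos (by omega), map_smul, this, refl_self Q (hb0 _)]
      rw [pow_succ, pow_succ]; simp
    · rw [if_neg (by omega), if_neg (by omega), map_smul,
        refl_of_polar_eq_zero Q (hb _ _ fun h => by subst h; exact lt_irrefl _ h1)]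
      rw [pow_succ]; simp

lemma neg_one_mem (hb : ∀ i j, i ≠ j → polar Q (b i) (b j) = 0) (hb0 : ∀ i, Q (b i) ≠ 0)
    (hn : Even n) (G : Submonoid (End ℝ V)) (hG : ∀ w, Q w ≠ 0 → -refl Q w ∈ G) :
    (-1 : End ℝ V) ∈ G := by
  obtain ⟨h, hh, hj⟩ := exists_partial_neg b hb hb0 G hG n le_rfl
  have : h = -1 := b.ext fun j => by
    rw [hj, if_pos j.2, hn.add_one.neg_one_pow]; simp
  exact this ▸ hh

end Basis

/-- The endomorphisms of `V` realized by conjugation with a unit of the Clifford algebra that is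
a product of anisotropic vectors. -/
def conjMonoid (Q : QuadraticForm ℝ V) : Submonoid (End ℝ V) where
  carrier := {f | ∃ x : (CliffordAlgebra Q)ˣ, ∃ l : List V, (∀ w ∈ l, Q w ≠ 0) ∧
    (x : CliffordAlgebra Q) = (l.map (ι Q)).prod ∧
    ∀ v, (x : CliffordAlgebra Q) * ι Q v * ((x⁻¹ : (CliffordAlgebra Q)ˣ) : CliffordAlgebra Q) =
      ι Q (f v)}
  one_mem' := ⟨1, [], by simp, by simp, by simp⟩
  mul_mem' := by
    rintro f g ⟨x, l, hl, hx, hf⟩ ⟨y, l', hl', hy, hg⟩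
    refine ⟨x * y, l ++ l', fun w hw => ?_, by simp [hx, hy], fun v => ?_⟩
    · rcases List.mem_append.1 hw with h | h
      exacts [hl w h, hl' w h]
    · rw [End.mul_apply, ← hf, ← hg, mul_inv_rev]
      simp only [Units.val_mul, mul_assoc]

lemma neg_refl_mem (Q : QuadraticForm ℝ V) {w : V} (hw : Q w ≠ 0) : -refl Q w ∈ conjMonoid Q := by
  let : Invertible (Q w) := invertibleOfNonzero hw
  let := invertibleιOfInvertible Q w
  refine ⟨unitOfInvertible (ι Q w), [w], by simpa using hw, by simp, fun v => ?_⟩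
  change ι Q w * ι Q v * ⅟(ι Q w) = _
  rw [ι_mul_ι_mul_invOf_ι, LinearMap.neg_apply, refl_apply, neg_sub, invOf_eq_inv]

end CliffordConj

open CliffordConj in
/-- For a nondegenerate quadratic form on an even-dimensional real vector space,
every isometry of `Q` is realized by conjugation by a unit of the Clifford algebra
which is a product of invertible generators `ι Q wᵢ` (with `Q wᵢ ≠ 0`): the
conjugation homomorphism from the Clifford group onto `O(Q)` is surjective. -/
theorem cliffordGroup_conj_surjective_onto_orthogonal
    (V : Type*) [AddCommGroup V] [Module ℝ V] [FiniteDimensional ℝ V]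
    (Q : QuadraticForm ℝ V)
    (hQ : (QuadraticMap.polarBilin Q).Nondegenerate)
    (hdim : Even (Module.finrank ℝ V)) :
    ∀ g : V ≃ₗ[ℝ] V, (∀ v : V, Q (g v) = Q v) →
      ∃ x : (CliffordAlgebra Q)ˣ, ∃ (k : ℕ) (w : Fin k → V),
        (∀ i, Q (w i) ≠ 0) ∧
        (x : CliffordAlgebra Q) = (List.ofFn fun i => ι Q (w i)).prod ∧
        ∀ v : V,
          (x : CliffordAlgebra Q) * ι Q v * ((x⁻¹ : (CliffordAlgebra Q)ˣ) : CliffordAlgebra Q) =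
            ι Q (g v) := by
  intro g hg
  let : Invertible (2 : ℝ) := invertibleOfNonzero two_ne_zero
  obtain ⟨b, hb⟩ := LinearMap.BilinForm.exists_orthogonal_basis (B := Q.polarBilin)
    ⟨fun v w => QuadraticMap.polar_comm Q v w⟩
  have hb' : ∀ i j, i ≠ j → QuadraticMap.polar Q (b i) (b j) = 0 := fun i j hij => hb hij
  have hb0 : ∀ i, Q (b i) ≠ 0 := fun i h0 =>
    hb.not_isOrtho_basis_self_of_separatingLeft hQ.1 i
      (by rw [QuadraticMap.polarBilin_apply_apply, QuadraticMap.polar_self, h0, smul_zero])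
  have hneg := neg_one_mem b hb' hb0 hdim (conjMonoid Q) fun w hw => neg_refl_mem Q hw
  have hrefl : ∀ w, Q w ≠ 0 → refl Q w ∈ conjMonoid Q := fun w hw => by
    simpa using (conjMonoid Q).mul_mem hneg (neg_refl_mem Q hw)
  obtain ⟨x, l, hl, hx, hconj⟩ := isometry_mem_of_fix b hb' hb0 (conjMonoid Q) hrefl
    _ 0 (zero_add _) g.toLinearMap hg (fun j hj => absurd hj (Nat.not_lt_zero _))
  refine ⟨x, l.length, l.get, fun i => hl _ (l.get_mem i), ?_, hconj⟩
  rw [hx]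
  congr 1
  conv_lhs => rw [← List.ofFn_get l, List.map_ofFn]
  rfl
end

section
/- Let Q be a nondegenerate quadratic form on a finite-dimensional real vector space V and let x be an element of the spin group spinGroup Q. Then conjugation by x preserves the subspace ι(V): there exists a linear automorphism g of V with x * ι(v) * x⁻¹ = ι(g v) for all v ∈ V, and this g is an isometry of Q of determinant 1 (a special orthogonal transformation). -/
/-!
Every element `x` of the Lipschitz group acts on vectors by twisted conjugation
`v ↦ involute x * v * x⁻¹`. For a generator `x = ι a` this is the reflection in the hyperplane
orthogonal to `a`, of determinant `-1`, while `involute (ι a) = -ι a`. Both the determinant and the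
sign of the grade involution are multiplicative, so the twisted action `g` of any Lipschitz element
satisfies `involute x = det g • x` (`exists_twisted_action`). An element of the spin group is even,
hence fixed by `involute`: the twisted action is then ordinary conjugation and `det g = 1`.
Conjugation preserves the squares `ι v * ι v = Q v`, so `g` is an isometry.
-/

open CliffordAlgebra

/-- The twisted conjugation action of a Lipschitz element, together with the fact that the
determinant of the action is the eigenvalue of the grade involution on that element. -/
theorem exists_twisted_action {V : Type*} [AddCommGroup V] [Module ℝ V] [FiniteDimensional ℝ V]
    {Q : QuadraticForm ℝ V} {x : (CliffordAlgebra Q)ˣ} (hx : x ∈ lipschitzGroup Q) :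
    ∃ g : V ≃ₗ[ℝ] V,
      (∀ v, involute (x : CliffordAlgebra Q) * ι Q v = ι Q (g v) * x) ∧
      involute (x : CliffordAlgebra Q) =
        LinearMap.det (g : V →ₗ[ℝ] V) • (x : CliffordAlgebra Q) := by
  unfold lipschitzGroup at hx
  induction hx using Subgroup.closure_induction with
  | mem x hx =>
    obtain ⟨a, ha⟩ := hx
    have hQa : Q a ≠ 0 := (isUnit_of_isUnit_ι Q (ha ▸ x.isUnit)).ne_zero
    -- The coroot of `a`: the functional `v ↦ polar Q a v / Q a`.
    let f : Module.Dual ℝ V := (Q a)⁻¹ • QuadraticMap.polarBilin Q a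
    have hf (v : V) : f v = (Q a)⁻¹ * QuadraticMap.polar Q a v := rfl
    have hfa : f a = 2 := by
      rw [hf, QuadraticMap.polar_self, nsmul_eq_mul]
      field_simp
      norm_num
    refine ⟨Module.reflection hfa, fun v => ?_, ?_⟩
    · rw [← ha, involute_ι, Module.reflection_apply, map_sub, map_smul, sub_mul, smul_mul_assoc,
        ι_sq_scalar, hf, neg_mul, neg_eq_iff_eq_neg, neg_sub,
        eq_sub_iff_add_eq, ι_mul_ι_add_swap, Algebra.smul_def, ← map_mul, mul_right_comm,
        inv_mul_cancel₀ hQa, one_mul]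
    · have hdet : LinearMap.det (Module.reflection hfa : V →ₗ[ℝ] V) = -1 := by
        have : (Module.reflection hfa : V →ₗ[ℝ] V) = LinearMap.transvection f (-a) := by
          ext v
          simp [Module.reflection_apply, LinearMap.transvection.apply, sub_eq_add_neg]
        rw [this, LinearMap.transvection.det, map_neg, hfa]
        norm_num
      rw [hdet, ← ha, involute_ι, neg_one_smul]
  | one => exact ⟨LinearEquiv.refl ℝ V, by simp, by simp⟩
  | mul x y _ _ hx hy =>
    obtain ⟨g, hg, hgd⟩ := hx
    obtain ⟨h, hh, hhd⟩ := hy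
    refine ⟨h.trans g, fun v => ?_, ?_⟩
    · rw [Units.val_mul, map_mul, mul_assoc, hh, ← mul_assoc, hg, mul_assoc, LinearEquiv.trans_apply]
    · rw [Units.val_mul, map_mul, hgd, hhd, LinearEquiv.coe_trans, LinearMap.det_comp,
        smul_mul_smul_comm]
  | inv x _ hx =>
    obtain ⟨g, hg, hgd⟩ := hx
    have hinv : involute ((x⁻¹ : (CliffordAlgebra Q)ˣ) : CliffordAlgebra Q) *
        involute (x : CliffordAlgebra Q) = 1 := by
      rw [← map_mul, Units.inv_mul, map_one]
    refine ⟨g.symm, fun v => ?_, ?_⟩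
    · have h := hg (g.symm v)
      rw [LinearEquiv.apply_symm_apply] at h
      rw [Units.eq_mul_inv_iff_mul_eq, mul_assoc, ← h, ← mul_assoc, hinv, one_mul]
    · rw [hgd, mul_smul_comm, ← smul_mul_assoc] at hinv
      have h := Units.eq_inv_of_mul_eq_one_right hinv
      have hd : LinearMap.det (g.symm : V →ₗ[ℝ] V) * LinearMap.det (g : V →ₗ[ℝ] V) = 1 :=
        LinearEquiv.det_symm_mul_det g
      nth_rewrite 2 [← h]
      rw [smul_smul, hd, one_smul]

/-- Conjugation by an element of the spin group preserves the generating subspace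
`ι (V)` and induces a special orthogonal transformation of `(V, Q)`. -/
theorem spinGroup_conj_acts_as_special_orthogonal
    (V : Type*) [AddCommGroup V] [Module ℝ V] [FiniteDimensional ℝ V]
    (Q : QuadraticForm ℝ V)
    (hQ : (QuadraticMap.polarBilin Q).Nondegenerate)
    (x : CliffordAlgebra Q) (hx : x ∈ spinGroup Q) :
    ∃ (g : V ≃ₗ[ℝ] V) (x' : CliffordAlgebra Q),
      x * x' = 1 ∧ x' * x = 1 ∧
      (∀ v : V, x * ι Q v * x' = ι Q (g v)) ∧
      (∀ v : V, Q (g v) = Q v) ∧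
      LinearMap.det (g : V →ₗ[ℝ] V) = 1 := by
  obtain ⟨u, hu, rfl⟩ := pinGroup.mem_lipschitzGroup (spinGroup.mem_pin hx)
  obtain ⟨g, hg, hgd⟩ := exists_twisted_action hu
  have hinv : involute (u : CliffordAlgebra Q) = u := spinGroup.involute_eq hx
  rw [hinv] at hgd
  have hconj (v : V) : (u : CliffordAlgebra Q) * ι Q v * ↑u⁻¹ = ι Q (g v) := by
    rw [Units.mul_inv_eq_iff_eq_mul, ← hg v, hinv]
  refine ⟨g, ↑u⁻¹, u.mul_inv, u.inv_mul, hconj, fun v => ?_, ?_⟩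
  · apply FaithfulSMul.algebraMap_injective ℝ (CliffordAlgebra Q)
    rw [← ι_sq_scalar Q (g v), ← hconj]
    calc (u : CliffordAlgebra Q) * ι Q v * ↑u⁻¹ * (↑u * ι Q v * ↑u⁻¹)
        = ↑u * (ι Q v * ι Q v) * ↑u⁻¹ := by simp only [mul_assoc, Units.inv_mul_cancel_left]
      _ = algebraMap ℝ _ (Q v) := by
        rw [ι_sq_scalar, ← Algebra.commutes, mul_assoc, Units.mul_inv, mul_one]
  · refine smul_left_injective ℝ u.ne_zero ?_
    simpa using hgd.symm
end

section
/- Let Q be a nondegenerate quadratic form on a finite-dimensional real vector space V, and let x ∈ spinGroup Q satisfy x * ι(v) = ι(v) * x for all v ∈ V (i.e. conjugation by x acts as the identity on ι(V)). Then x = 1 or x = −1. Hence the kernel of the conjugation homomorphism ζ : spinGroup Q → SO(Q) is the two-element subgroup {1, −1} ≅ ℤ/2, giving the exact sequence 1 → ℤ/2 → Spin(V,Q) → SO(V,Q). -/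
/-!
Write `v ⌋ x` for the contraction of `x` by the functional `polar Q v`. In any Clifford algebra
`ι v * x - involute x * ι v = v ⌋ x` (`ι_mul_sub_involute_mul_ι`). An element `x` of the spin group
is even, so `involute x = x`; if it also commutes with all vectors then `v ⌋ x = 0` for every `v`,
and, the polar form being nondegenerate on a finite-dimensional space, `x` is killed by the
contraction with *every* functional.

Such an element is a scalar (`exists_eq_algebraMap_of_contractLeft_eq_zero`). The linear isomorphism
of the Clifford algebra with the exterior algebra respects contractions and scalars, so this can be
checked in the exterior algebra. There the number operator `∑ i, e i ∧ (e i)* ⌋ x` multiplies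
elements of degree `n` by `n` (`numberOp_of_mem_exteriorPower`); its kernel is therefore the
degree-zero part, that is, the scalars.

Finally `star` fixes scalars, so `star x * x = 1` says that the scalar squares to `1`.
-/

open CliffordAlgebra

/-- The failure of a vector to (super)commute with `x` is the contraction of `x` by that vector. -/
theorem ι_mul_sub_involute_mul_ι {R M : Type*} [CommRing R] [AddCommGroup M] [Module R M]
    (Q : QuadraticForm R M) (v : M) (x : CliffordAlgebra Q) :
    ι Q v * x - involute x * ι Q v = contractLeft (QuadraticMap.polarBilin Q v) x := by
  induction x using CliffordAlgebra.left_induction with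
  | algebraMap r => simp [Algebra.commutes]
  | add x y hx hy => rw [map_add, map_add, ← hx, ← hy]; noncomm_ring
  | ι_mul x m hx =>
    rw [contractLeft_ι_mul, ← hx, map_mul, involute_ι, QuadraticMap.polarBilin_apply_apply,
      Algebra.smul_def, ← ι_mul_ι_add_swap]
    noncomm_ring

/-- The number operator `x ↦ ∑ i, e i ∧ (e i)* ⌋ x` on the exterior algebra, for a finite
basis `e`. -/
noncomputable def numberOp {K V I : Type*} [Field K] [AddCommGroup V] [Module K V] [Fintype I]
    (b : Module.Basis I K V) : ExteriorAlgebra K V →ₗ[K] ExteriorAlgebra K V :=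
  ∑ i, LinearMap.mulLeft K (ExteriorAlgebra.ι K (b i)) ∘ₗ
    (contractLeft (Q := (0 : QuadraticForm K V)) (b.coord i))

section NumberOp

variable {K V I : Type*} [Field K] [AddCommGroup V] [Module K V] [Fintype I]
  (b : Module.Basis I K V)

theorem numberOp_apply (x : ExteriorAlgebra K V) :
    numberOp b x = ∑ i, ExteriorAlgebra.ι K (b i) *
      contractLeft (Q := (0 : QuadraticForm K V)) (b.coord i) x := by
  simp [numberOp]

theorem numberOp_algebraMap (r : K) : numberOp b (algebraMap K _ r) = 0 := by
  rw [numberOp_apply]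
  refine Finset.sum_eq_zero fun i _ => ?_
  have h := contractLeft_algebraMap (0 : QuadraticForm K V) (b.coord i) r
  exact (congrArg _ h).trans (mul_zero _)

theorem numberOp_ι_mul (m : V) (y : ExteriorAlgebra K V) :
    numberOp b (ExteriorAlgebra.ι K m * y) =
      ExteriorAlgebra.ι K m * y + ExteriorAlgebra.ι K m * numberOp b y := by
  have key (i : I) : ExteriorAlgebra.ι K (b i) * contractLeft (Q := (0 : QuadraticForm K V))
        (b.coord i) (ExteriorAlgebra.ι K m * y) =
      ExteriorAlgebra.ι K (b.coord i m • b i) * y + ExteriorAlgebra.ι K m *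
        (ExteriorAlgebra.ι K (b i) *
          contractLeft (Q := (0 : QuadraticForm K V)) (b.coord i) y) := by
    have h := contractLeft_ι_mul (Q := (0 : QuadraticForm K V)) (b.coord i) m y
    have hs : ExteriorAlgebra.ι K (b i) * ExteriorAlgebra.ι K m =
        -(ExteriorAlgebra.ι K m * ExteriorAlgebra.ι K (b i)) :=
      eq_neg_of_add_eq_zero_left (ExteriorAlgebra.ι_add_mul_swap _ _)
    refine (congrArg _ h).trans ?_
    refine (mul_sub _ _ _).trans ?_
    rw [mul_smul_comm, map_smul, smul_mul_assoc, ← mul_assoc, ← mul_assoc, sub_eq_add_neg]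
    congr 1
    exact ((congrArg (fun z => -(z * _)) hs).trans (by rw [neg_mul, neg_neg]))
  rw [numberOp_apply, Finset.sum_congr rfl fun i _ => key i, Finset.sum_add_distrib,
    ← Finset.sum_mul, ← map_sum, ← Finset.mul_sum, ← numberOp_apply]
  simp only [Module.Basis.coord_apply, b.sum_repr]

theorem numberOp_of_mem_exteriorPower {n : ℕ} {x : ExteriorAlgebra K V} (hx : x ∈ ⋀[K]^n V) :
    numberOp b x = (n : K) • x := by
  induction hx using Submodule.pow_induction_on_left' with
  | algebraMap r => rw [numberOp_algebraMap, Nat.cast_zero, zero_smul]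
  | add x y i _ _ ihx ihy => rw [map_add, ihx, ihy, smul_add]
  | mem_mul m hm i x _ ih =>
    obtain ⟨m, rfl⟩ := hm
    rw [numberOp_ι_mul, ih, mul_smul_comm, Nat.cast_succ, add_smul, one_smul, add_comm]

theorem proj_numberOp (n : ℕ) (x : ExteriorAlgebra K V) :
    GradedAlgebra.proj (fun i : ℕ => ⋀[K]^i V) n (numberOp b x) =
      (n : K) • GradedAlgebra.proj (fun i : ℕ => ⋀[K]^i V) n x := by
  induction x using DirectSum.Decomposition.inductionOn fun i : ℕ => ⋀[K]^i V with
  | zero => simp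
  | add x y hx hy => simp only [map_add, hx, hy, smul_add]
  | @homogeneous j x =>
    rw [numberOp_of_mem_exteriorPower b x.2, map_smul]
    by_cases h : j = n
    · subst h; rfl
    · rw [GradedAlgebra.proj_apply,
        DirectSum.decompose_of_mem_ne (fun i : ℕ => ⋀[K]^i V) x.2 h, smul_zero, smul_zero]

/-- In characteristic zero the number operator vanishes only on scalars. -/
theorem exists_eq_algebraMap_of_numberOp_eq_zero [CharZero K] {x : ExteriorAlgebra K V}
    (hx : numberOp b x = 0) : ∃ r : K, x = algebraMap K _ r := by
  have h0 (n : ℕ) (hn : n ≠ 0) : GradedAlgebra.proj (fun i : ℕ => ⋀[K]^i V) n x = 0 := by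
    have h := proj_numberOp b n x
    rw [hx, map_zero] at h
    exact (smul_eq_zero.mp h.symm).resolve_left (Nat.cast_ne_zero.mpr hn)
  have hmem : x ∈ ⋀[K]^0 V := by
    classical
    rw [← DirectSum.sum_support_decompose (fun i : ℕ => ⋀[K]^i V) x]
    refine Submodule.sum_mem _ fun i _ => ?_
    by_cases hi : i = 0
    · subst hi; exact SetLike.coe_mem _
    · have := h0 i hi
      rw [GradedAlgebra.proj_apply] at this
      rw [this]; exact Submodule.zero_mem _
  obtain ⟨r, hr⟩ := Submodule.mem_one.mp <|
    (pow_zero (LinearMap.range (ExteriorAlgebra.ι K))).le hmem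
  exact ⟨r, hr.symm⟩

end NumberOp

/-- An element of the Clifford algebra killed by all contractions is a scalar. -/
theorem exists_eq_algebraMap_of_contractLeft_eq_zero {K V : Type*} [Field K] [CharZero K]
    [AddCommGroup V] [Module K V] [FiniteDimensional K V] (Q : QuadraticForm K V)
    {x : CliffordAlgebra Q} (hx : ∀ d : Module.Dual K V, contractLeft d x = 0) :
    ∃ r : K, x = algebraMap K _ r := by
  let : Invertible (2 : K) := invertibleOfNonzero two_ne_zero
  let e := changeFormEquiv (changeForm.associated_neg_proof (Q := Q))
  have he (d : Module.Dual K V) : contractLeft d (e x) = 0 := by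
    have h := changeForm_contractLeft (changeForm.associated_neg_proof (Q := Q)) d x
    rw [hx, map_zero] at h
    exact h.symm
  obtain ⟨r, hr⟩ := exists_eq_algebraMap_of_numberOp_eq_zero (Module.finBasis K V) (x := e x) <| by
    rw [numberOp_apply]
    exact Finset.sum_eq_zero fun i _ => (congrArg _ (he _)).trans (mul_zero _)
  exact ⟨r, e.injective (hr.trans (changeForm_algebraMap
    (changeForm.associated_neg_proof (Q := Q)) r).symm)⟩

/-- The kernel of the conjugation homomorphism from the spin group to `SO(Q)` is
`{1, -1} ≅ ℤ/2`: if `x ∈ spinGroup Q` commutes with every generator `ι Q v`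
(i.e. conjugation by `x` is the identity on `ι (V)`), then `x = 1` or `x = -1`. -/
theorem spinGroup_conj_trivial_iff_pm_one
    (V : Type*) [AddCommGroup V] [Module ℝ V] [FiniteDimensional ℝ V]
    (Q : QuadraticForm ℝ V)
    (hQ : (QuadraticMap.polarBilin Q).Nondegenerate)
    (x : CliffordAlgebra Q) (hx : x ∈ spinGroup Q)
    (hcomm : ∀ v : V, x * ι Q v = ι Q v * x) :
    x = 1 ∨ x = -1 := by
  have hd (d : Module.Dual ℝ V) : contractLeft d x = 0 := by
    obtain ⟨v, rfl⟩ := (LinearMap.BilinForm.toDual _ hQ).surjective d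
    have hv : LinearMap.BilinForm.toDual _ hQ v = QuadraticMap.polarBilin Q v :=
      LinearMap.ext fun _ => LinearMap.BilinForm.toDual_def hQ
    rw [hv, ← ι_mul_sub_involute_mul_ι, spinGroup.involute_eq hx, hcomm, sub_self]
  obtain ⟨r, rfl⟩ := exists_eq_algebraMap_of_contractLeft_eq_zero Q hd
  have h1 := spinGroup.star_mul_self_of_mem hx
  rw [star_algebraMap, ← map_mul, ← map_one (algebraMap ℝ (CliffordAlgebra Q))] at h1
  rcases mul_self_eq_one_iff.mp ((algebraMap ℝ (CliffordAlgebra Q)).injective h1) with h | h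
  · left; rw [h, map_one]
  · right; rw [h, map_neg, map_one]
end

section
/- Let Q and Q' be nondegenerate quadratic forms on finite-dimensional real vector spaces V and V' with dim V = dim V'. Then the complexifications of their Clifford algebras are isomorphic as ℂ-algebras: ℂ ⊗[ℝ] CliffordAlgebra Q ≃ₐ[ℂ] ℂ ⊗[ℝ] CliffordAlgebra Q'. In particular, for all 0 ≤ m, m' ≤ n, ℂ ⊗ Cℓ(m, n−m) ≅ ℂ ⊗ Cℓ(m', n−m') as complex rings. -/
/-!
Over `ℂ` every element is a square, so a nondegenerate quadratic form is determined up to isometry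
by its rank (`QuadraticForm.equivalent_weightedSumSquares_of_isAlgClosed`). Since
`ℂ ⊗[ℝ] CliffordAlgebra Q` is the Clifford algebra of the base change `Q.baseChange ℂ`
(`CliffordAlgebra.equivBaseChange`) and isometric forms have isomorphic Clifford algebras, it
remains to see that base change preserves nondegeneracy: the Gram matrix of the base-changed form
in the base-changed basis is the original Gram matrix with entries mapped to `ℂ`, so its determinant
is still nonzero.
-/

open CliffordAlgebra TensorProduct

theorem nondegenerate_bilinForm_baseChange {K L V : Type*} [Field K] [Field L] [Algebra K L]
    [AddCommGroup V] [Module K V] [FiniteDimensional K V] (B : LinearMap.BilinForm K V)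
    (hB : B.Nondegenerate) : (B.baseChange L).Nondegenerate := by
  let b := Module.finBasis K V
  have hmat : LinearMap.BilinForm.toMatrix (b.baseChange L) (B.baseChange L) =
      (algebraMap K L).mapMatrix (LinearMap.BilinForm.toMatrix b B) := by
    ext i j
    simp [Algebra.smul_def]
  rw [LinearMap.BilinForm.nondegenerate_iff_det_ne_zero (b.baseChange L), hmat, ← RingHom.map_det]
  exact (map_ne_zero _).2 ((LinearMap.BilinForm.nondegenerate_iff_det_ne_zero b).1 hB)

theorem equivalent_baseChange_sumSquares {V : Type*} [AddCommGroup V] [Module ℝ V]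
    [FiniteDimensional ℝ V] (Q : QuadraticForm ℝ V)
    (hQ : (QuadraticMap.polarBilin Q).Nondegenerate) :
    (Q.baseChange ℂ).Equivalent
      (QuadraticMap.weightedSumSquares ℂ (1 : Fin (Module.finrank ℝ V) → ℂ)) := by
  have hpolar : (QuadraticMap.polarBilin (Q.baseChange ℂ)).SeparatingLeft := by
    rw [QuadraticForm.polarBilin_baseChange]
    exact (nondegenerate_bilinForm_baseChange _ hQ).1
  have hassoc : (QuadraticMap.associated (R := ℂ) (Q.baseChange ℂ)).SeparatingLeft := by
    intro x hx
    refine hpolar x fun y => ?_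
    -- The polar form is twice the associated bilinear form.
    rw [← QuadraticMap.two_nsmul_associated ℂ (Q.baseChange ℂ), LinearMap.smul_apply, LinearMap.smul_apply]
    exact (congrArg (2 • ·) (hx y)).trans (smul_zero 2)
  rw [← Module.finrank_baseChange (R := ℂ) (S := ℝ) (M' := V)]
  exact QuadraticForm.equivalent_weightedSumSquares_of_isAlgClosed _ hassoc

/-- Complexifications of the Clifford algebras of nondegenerate real quadratic forms
of the same rank are isomorphic as `ℂ`-algebras: in particular
`ℂ ⊗ Cℓ(m, n−m) ≅ ℂ ⊗ Cℓ(m', n−m')` for all `m, m'`. -/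
theorem complexified_cliffordAlgebra_iso_of_rank_eq
    (V V' : Type*) [AddCommGroup V] [Module ℝ V] [FiniteDimensional ℝ V]
    [AddCommGroup V'] [Module ℝ V'] [FiniteDimensional ℝ V']
    (Q : QuadraticForm ℝ V) (Q' : QuadraticForm ℝ V')
    (hQ : (QuadraticMap.polarBilin Q).Nondegenerate)
    (hQ' : (QuadraticMap.polarBilin Q').Nondegenerate)
    (hrank : Module.finrank ℝ V = Module.finrank ℝ V') :
    Nonempty ((ℂ ⊗[ℝ] CliffordAlgebra Q) ≃ₐ[ℂ] (ℂ ⊗[ℝ] CliffordAlgebra Q')) := by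
  have h := equivalent_baseChange_sumSquares Q hQ
  rw [hrank] at h
  obtain ⟨e⟩ := h.trans (equivalent_baseChange_sumSquares Q' hQ').symm
  exact ⟨(CliffordAlgebra.equivBaseChange ℂ Q).symm.trans
    ((CliffordAlgebra.equivOfIsometry e).trans (CliffordAlgebra.equivBaseChange ℂ Q'))⟩
end

section
/- For all natural numbers p ≥ 1 and q, there is an isomorphism of ℝ-algebras Cℓ(p, q) ≅ Cℓ(q+1, p−1) between the real Clifford algebras of signatures (p,q) and (q+1, p−1). (In the paper's notation: Cℓ(m, n−m) ≃ Cℓ(n−m+1, m−1) as real rings.) -/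
/-!
The isomorphism holds because a Clifford algebra with a unit vector `e`, `e² = 1`, can be given new
generators. If `e` is orthogonal to `M`, then for `m ∈ M` the product `e m` anticommutes with `e`
and satisfies `(e m)² = -e² m² = -m²`. Hence `e ↦ e`, `m ↦ e m` defines an algebra homomorphism
`Cℓ(⟨1⟩ ⊕ Q) → Cℓ(⟨1⟩ ⊕ -Q)` for every quadratic form `Q` (`twist`), and since
`e (e m) = m` the two twists for `Q` and `-Q` are mutually inverse (`twist_comp_twist`).

The signature form `(p, q)` is isometric to `P p ⊕ -P q`, where `P n` is the sum of `n` squares, so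
for `p = a + 1` it is `⟨1⟩ ⊕ (P a ⊕ -P q)`. Negating the second summand and swapping its two parts
gives `⟨1⟩ ⊕ (P q ⊕ -P a)`, which is the form of signature `(q + 1, a)`.
-/

open CliffordAlgebra

/-- The diagonal quadratic form of signature `(p, q)` on `ℝ^(p+q)`:
`Q x = x₁² + ⋯ + x_p² − x_{p+1}² − ⋯ − x_{p+q}²`. -/
noncomputable def signatureForm (p q : ℕ) : QuadraticForm ℝ (Fin (p + q) → ℝ) :=
  QuadraticMap.weightedSumSquares ℝ (fun i : Fin (p + q) => if (i : ℕ) < p then (1 : ℝ) else -1)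

/-- The real Clifford algebra `Cℓ(p, q)` of signature `(p, q)`. -/
noncomputable abbrev CliffordAlgebraSignature (p q : ℕ) :=
  CliffordAlgebra (signatureForm p q)

namespace CliffordTwist

open QuadraticMap

section Twist

variable {R M : Type*} [CommRing R] [AddCommGroup M] [Module R M]

/-- The form `t² + Q m` on `R × M`: the orthogonal sum of a unit line and `Q`. -/
abbrev oneProd (Q : QuadraticForm R M) : QuadraticForm R (R × M) :=
  (QuadraticMap.sq (R := R)).prod Q

/-- The linear map `(t, m) ↦ t e + e m` into the Clifford algebra of `⟨1⟩ ⊕ Q'`, where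
`e = ι (1, 0)`. -/
noncomputable def twistLin (Q' : QuadraticForm R M) : R × M →ₗ[R] CliffordAlgebra (oneProd Q') :=
  LinearMap.coprod (LinearMap.toSpanSingleton R _ (ι (oneProd Q') (1, 0)))
    (LinearMap.mulLeft R (ι (oneProd Q') (1, 0)) ∘ₗ ι (oneProd Q') ∘ₗ LinearMap.inr R R M)

theorem twistLin_apply (Q' : QuadraticForm R M) (x : R × M) :
    twistLin Q' x = x.1 • ι (oneProd Q') (1, 0) + ι (oneProd Q') (1, 0) * ι (oneProd Q') (0, x.2) := by
  simp [twistLin]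

theorem unit_mul_unit (Q : QuadraticForm R M) :
    ι (oneProd Q) (1, 0) * ι (oneProd Q) (1, 0) = 1 := by
  simp [ι_sq_scalar]

theorem vec_mul_unit (Q : QuadraticForm R M) (m : M) :
    ι (oneProd Q) (0, m) * ι (oneProd Q) (1, 0) =
      -(ι (oneProd Q) (1, 0) * ι (oneProd Q) (0, m)) := by
  refine ι_mul_ι_comm_of_isOrtho ?_
  simp [QuadraticMap.isOrtho_def, add_comm]

theorem vec_mul_vec (Q : QuadraticForm R M) (m : M) :
    ι (oneProd Q) (0, m) * ι (oneProd Q) (0, m) = algebraMap R _ (Q m) := by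
  simp [ι_sq_scalar]

theorem twistLin_mul_self (Q Q' : QuadraticForm R M) (h : Q' = -Q) (x : R × M) :
    twistLin Q' x * twistLin Q' x = algebraMap R _ (oneProd Q x) := by
  obtain ⟨t, m⟩ := x
  have hee := unit_mul_unit Q'
  have hve := vec_mul_unit Q' m
  have hvv := vec_mul_vec Q' m
  rw [twistLin_apply]
  generalize ι (oneProd Q') (1, 0) = e at *
  generalize ι (oneProd Q') (0, m) = v at *
  have h1 : e * (e * v) = v := by rw [← mul_assoc, hee, one_mul]
  have h2 : e * v * e = -v := by rw [mul_assoc, hve, mul_neg, h1]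
  have h3 : e * v * (e * v) = algebraMap R _ (Q m) := by
    rw [← mul_assoc, h2, neg_mul, hvv, h]; simp
  simp only [add_mul, mul_add, smul_mul_assoc, mul_smul_comm, hee, h1, h2, h3]
  simp [Algebra.algebraMap_eq_smul_one, smul_smul, add_smul]

/-- The homomorphism `Cℓ(⟨1⟩ ⊕ Q) → Cℓ(⟨1⟩ ⊕ Q')`, for `Q' = -Q`, with `e ↦ e` and `m ↦ e m`. The
form `Q'` is a separate argument so that `- -Q` never has to be rewritten to `Q` in a type. -/
noncomputable def twist (Q Q' : QuadraticForm R M) (h : Q' = -Q) :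
    CliffordAlgebra (oneProd Q) →ₐ[R] CliffordAlgebra (oneProd Q') :=
  lift (oneProd Q) ⟨twistLin Q', twistLin_mul_self Q Q' h⟩

theorem twist_comp_twist (Q Q' : QuadraticForm R M) (h : Q' = -Q) (h' : Q = -Q') :
    (twist Q' Q h').comp (twist Q Q' h) = AlgHom.id R _ := by
  have hz (Q : QuadraticForm R M) : ι (oneProd Q) (0, 0) = 0 := map_zero _
  ext x
  · simp [twist, twistLin_apply, hz]
  · simp [twist, twistLin_apply, hz, ← mul_assoc]

/-- `Cℓ(⟨1⟩ ⊕ Q) ≅ Cℓ(⟨1⟩ ⊕ -Q)`. -/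
noncomputable def twistEquiv (Q : QuadraticForm R M) :
    CliffordAlgebra (oneProd Q) ≃ₐ[R] CliffordAlgebra (oneProd (-Q)) :=
  AlgEquiv.ofAlgHom (twist Q (-Q) rfl) (twist (-Q) Q (neg_neg Q).symm)
    (twist_comp_twist _ _ _ _) (twist_comp_twist _ _ _ _)

/-- Associativity of the orthogonal sum, with the unit line as first summand. -/
def oneProdAssoc {N : Type*} [AddCommGroup N] [Module R N] (Q₁ : QuadraticForm R M)
    (Q₂ : QuadraticForm R N) :
    ((oneProd Q₁).prod Q₂).IsometryEquiv (oneProd (Q₁.prod Q₂)) where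
  toLinearEquiv := LinearEquiv.prodAssoc R R M N
  map_app' x := by
    simp [add_assoc]

end Twist

/-- The sum of squares on `ℝⁿ`. -/
noncomputable abbrev P (n : ℕ) : QuadraticForm ℝ (Fin n → ℝ) :=
  weightedSumSquares ℝ (fun _ : Fin n => (1 : ℝ))

/-- `ℝ^(p+q)` with the form of signature `(p, q)` splits as `P p ⊕ -P q`. -/
noncomputable def signatureSplit (p q : ℕ) :
    (signatureForm p q).IsometryEquiv ((P p).prod (-P q)) where
  toLinearEquiv := LinearEquiv.funCongrLeft ℝ ℝ finSumFinEquiv ≪≫ₗ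
    LinearEquiv.sumArrowLequivProdArrow (Fin p) (Fin q) ℝ ℝ
  map_app' x := by
    simp [signatureForm, weightedSumSquares_apply, Fin.sum_univ_add, LinearMap.funLeft]

/-- `ℝ^(n+1)` splits off its first coordinate: `P (n + 1)` is `⟨1⟩ ⊕ P n`. -/
noncomputable def sumSquaresSucc (n : ℕ) : (P (n + 1)).IsometryEquiv (oneProd (P n)) where
  toLinearEquiv := (Fin.consLinearEquiv ℝ (fun _ => ℝ)).symm
  map_app' x := by
    simp [weightedSumSquares_apply, Fin.sum_univ_succ, Fin.tail]

/-- The form of signature `(a + 1, b)` is `⟨1⟩ ⊕ (P a ⊕ -P b)`. -/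
noncomputable def signatureSuccSplit (a b : ℕ) :
    (signatureForm (a + 1) b).IsometryEquiv (oneProd ((P a).prod (-P b))) :=
  ((signatureSplit (a + 1) b).trans
    ((sumSquaresSucc a).prod (QuadraticMap.IsometryEquiv.refl _))).trans
    (oneProdAssoc (P a) (-P b))

/-- The forms `-(P a ⊕ -P b)` and `P b ⊕ -P a` agree after swapping the summands. -/
noncomputable def negSwap (a b : ℕ) :
    (-((P a).prod (-P b))).IsometryEquiv ((P b).prod (-P a)) where
  toLinearEquiv := LinearEquiv.prodComm ℝ _ _
  map_app' x := by
    simp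

end CliffordTwist

open CliffordTwist in
/-- `Cℓ(p, q) ≅ Cℓ(q+1, p−1)` as real algebras, for `p ≥ 1`. -/
theorem cliffordAlgebraSignature_iso_q_succ_p_pred (p q : ℕ) (hp : 1 ≤ p) :
    Nonempty (CliffordAlgebraSignature p q ≃ₐ[ℝ] CliffordAlgebraSignature (q + 1) (p - 1)) := by
  obtain ⟨a, rfl⟩ := Nat.exists_eq_add_of_le' hp
  rw [Nat.add_sub_cancel]
  exact ⟨((equivOfIsometry (signatureSuccSplit a q)).trans (twistEquiv _)).trans
    (equivOfIsometry (((QuadraticMap.IsometryEquiv.refl _).prod (negSwap a q)).trans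
      (signatureSuccSplit q a).symm))⟩
end

section
/- For all natural numbers p ≥ 4 and q, there is an isomorphism of ℝ-algebras Cℓ(p, q) ≅ Cℓ(p−4, q+4) between the real Clifford algebras of signatures (p,q) and (p−4, q+4). (In the paper's notation: Cℓ(m, n−m) ≃ Cℓ(m−4, n−m+4) as real rings, for n, m ≥ 4.) -/
/-!
Let `e_i` be the standard generators of `Cℓ(p, q)`, pick four of them with the same square `ε = ±1`,
and let `ω` be their product. Then `ω² = 1`, and `ω` anticommutes with the four chosen generators
and commutes with all the others. Replacing each chosen `e_i` by `e_i ω` and keeping the other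
generators (`volumeTwist`) therefore gives again a pairwise anticommuting family, in which the
squares of the four chosen elements have changed sign (`IsCliffordFamily.volumeTwist`). The product
of the four new elements is again `ω` (`IsCliffordFamily.volume_volumeTwist`), so twisting twice
gives back the original family (`IsCliffordFamily.volumeTwist_volumeTwist`). By the universal
property, the twist defines homomorphisms in both directions between the Clifford algebras of the
two diagonal forms, and they are mutually inverse (`cliffordEquivOfFlip`).

The theorem follows by choosing the generators with indices `p - 4, …, p - 1`.
-/

open CliffordAlgebra

/-! ### Twisting an anticommuting family by a volume element -/

/-- A family `e` in an `ℝ`-algebra satisfying the defining relations of the generators of the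
Clifford algebra of the diagonal form `∑ w i x_i²`: the square of `e i` is `w i`, and distinct
members anticommute. -/
structure IsCliffordFamily {I A : Type*} [Ring A] [Algebra ℝ A] (w : I → ℝ) (e : I → A) : Prop where
  sq : ∀ i, e i * e i = algebraMap ℝ A (w i)
  anti : ∀ i j, i ≠ j → e i * e j = -(e j * e i)

/-- The product of the four members of the family `e` indexed by `s`. -/
def volume {I A : Type*} [Ring A] (s : Fin 4 → I) (e : I → A) : A :=
  e (s 0) * e (s 1) * e (s 2) * e (s 3)

open Classical in
/-- Multiply the members of `e` indexed by the range of `s` by their volume element on the right,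
and keep the other members. -/
noncomputable def volumeTwist {I A : Type*} [Ring A] (s : Fin 4 → I) (e : I → A) (i : I) : A :=
  if i ∈ Set.range s then e i * volume s e else e i

theorem volumeTwist_apply {I A : Type*} [Ring A] (s : Fin 4 → I) (e : I → A) (k : Fin 4) :
    volumeTwist s e (s k) = e (s k) * volume s e :=
  if_pos ⟨k, rfl⟩

theorem volumeTwist_of_notMem {I A : Type*} [Ring A] (s : Fin 4 → I) (e : I → A) {i : I}
    (hi : i ∉ Set.range s) : volumeTwist s e i = e i :=
  if_neg hi

theorem map_volumeTwist {I A B : Type*} [Ring A] [Algebra ℝ A] [Ring B] [Algebra ℝ B]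
    (f : A →ₐ[ℝ] B) (s : Fin 4 → I) (e : I → A) (i : I) :
    f (volumeTwist s e i) = volumeTwist s (fun j => f (e j)) i := by
  simp only [volumeTwist, volume]
  split_ifs <;> simp

namespace IsCliffordFamily

variable {I A : Type*} [Ring A] [Algebra ℝ A] {w w' : I → ℝ} {e : I → A} {s : Fin 4 → I} {ε : ℝ}

theorem mul_volume (he : IsCliffordFamily w e) (hs : Function.Injective s) (k : Fin 4) :
    volume s e * e (s k) = -(e (s k) * volume s e) := by
  have key : ∀ l, SemiconjBy (e (s k)) (e (s l)) (if l = k then e (s l) else -e (s l)) := by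
    intro l
    split_ifs with h
    · rw [h]; rfl
    · change _ * _ = _ * _
      rw [neg_mul, he.anti _ _ (fun h' => h (hs h').symm)]
  have h := (((key 0).mul_right (key 1)).mul_right (key 2)).mul_right (key 3)
  rw [eq_neg_iff_add_eq_zero, add_comm, ← eq_neg_iff_add_eq_zero]
  refine Eq.trans h.eq ?_
  fin_cases k <;> simp [volume]

theorem mul_volume_of_notMem (he : IsCliffordFamily w e) {i : I} (hi : i ∉ Set.range s) :
    volume s e * e i = e i * volume s e := by
  have key : ∀ l, SemiconjBy (e i) (e (s l)) (-e (s l)) := by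
    intro l
    change _ * _ = _ * _
    rw [neg_mul, he.anti _ _ (fun h' => hi ⟨l, h'.symm⟩)]
  have h := (((key 0).mul_right (key 1)).mul_right (key 2)).mul_right (key 3)
  refine (Eq.trans h.eq ?_).symm
  simp [volume]

/-- The volume element is an involution: reversing its four factors costs the sign
`(-1) ^ (3 + 2 + 1) = 1`, and the squares multiply to `ε ^ 4 = 1`. -/
theorem volume_mul_volume (he : IsCliffordFamily w e) (hs : Function.Injective s)
    (hε : ε * ε = 1) (hw : ∀ k, w (s k) = ε) : volume s e * volume s e = 1 := by
  have sq : ∀ k, e (s k) * e (s k) = ε • (1 : A) := fun k => by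
    rw [he.sq, hw, Algebra.algebraMap_eq_smul_one]
  have anti : ∀ k l, k ≠ l → e (s k) * e (s l) = -(e (s l) * e (s k)) :=
    fun k l h => he.anti _ _ (hs.ne h)
  have anti' : ∀ k l x, k ≠ l → e (s k) * (e (s l) * x) = -(e (s l) * (e (s k) * x)) :=
    fun k l x h => by rw [← mul_assoc, anti k l h, neg_mul, mul_assoc]
  simp only [volume, mul_assoc]
  simp [anti' 3 0, anti' 2 0, anti' 1 0, anti' 3 1, anti' 2 1, anti' 3 2, sq, smul_smul, hε]

theorem twist_mul_twist (he : IsCliffordFamily w e) (hs : Function.Injective s)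
    (hε : ε * ε = 1) (hw : ∀ k, w (s k) = ε) (k l : Fin 4) :
    e (s k) * volume s e * (e (s l) * volume s e) = -(e (s k) * e (s l)) := by
  rw [mul_assoc, ← mul_assoc (volume s e), he.mul_volume hs, neg_mul, mul_assoc (e (s l)),
    he.volume_mul_volume hs hε hw, mul_one, mul_neg]

/-- The twisted family satisfies the Clifford relations for the weights whose signs are changed on
the range of `s`. -/
theorem volumeTwist (he : IsCliffordFamily w e) (hs : Function.Injective s)
    (hε : ε * ε = 1) (hw : ∀ k, w (s k) = ε) (hw' : ∀ k, w' (s k) = -ε)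
    (hww' : ∀ i ∉ Set.range s, w i = w' i) : IsCliffordFamily w' (volumeTwist s e) where
  sq i := by
    by_cases hi : i ∈ Set.range s
    · obtain ⟨k, rfl⟩ := hi
      rw [volumeTwist_apply, he.twist_mul_twist hs hε hw, he.sq, hw, hw', map_neg]
    · rw [volumeTwist_of_notMem s e hi, he.sq, hww' i hi]
  anti i j hij := by
    by_cases hi : i ∈ Set.range s <;> by_cases hj : j ∈ Set.range s
    · obtain ⟨k, rfl⟩ := hi
      obtain ⟨l, rfl⟩ := hj
      rw [volumeTwist_apply, volumeTwist_apply, he.twist_mul_twist hs hε hw,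
        he.twist_mul_twist hs hε hw, he.anti _ _ hij]
    · obtain ⟨k, rfl⟩ := hi
      rw [volumeTwist_apply, volumeTwist_of_notMem s e hj, mul_assoc, he.mul_volume_of_notMem hj,
        ← mul_assoc, he.anti _ _ hij, neg_mul, mul_assoc]
    · obtain ⟨l, rfl⟩ := hj
      rw [volumeTwist_apply, volumeTwist_of_notMem s e hi, mul_assoc, he.mul_volume_of_notMem hi,
        ← mul_assoc, ← mul_assoc, he.anti _ _ hij, neg_mul]
    · rw [volumeTwist_of_notMem s e hi, volumeTwist_of_notMem s e hj, he.anti _ _ hij]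

theorem volume_volumeTwist (he : IsCliffordFamily w e) (hs : Function.Injective s)
    (hε : ε * ε = 1) (hw : ∀ k, w (s k) = ε) :
    volume s (_root_.volumeTwist s e) = volume s e := by
  rw [volume, volumeTwist_apply, volumeTwist_apply, volumeTwist_apply, volumeTwist_apply,
    he.twist_mul_twist hs hε hw, mul_assoc, he.twist_mul_twist hs hε hw, neg_mul_neg,
    ← mul_assoc]
  rfl

theorem volumeTwist_volumeTwist (he : IsCliffordFamily w e) (hs : Function.Injective s)
    (hε : ε * ε = 1) (hw : ∀ k, w (s k) = ε) :
    _root_.volumeTwist s (_root_.volumeTwist s e) = e := by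
  funext i
  by_cases hi : i ∈ Set.range s
  · obtain ⟨k, rfl⟩ := hi
    rw [volumeTwist_apply, he.volume_volumeTwist hs hε hw, volumeTwist_apply, mul_assoc,
      he.volume_mul_volume hs hε hw, mul_one]
  · rw [volumeTwist_of_notMem s _ hi, volumeTwist_of_notMem s e hi]

end IsCliffordFamily

/-! ### Clifford algebras of diagonal forms -/

section Diagonal

variable {I A : Type*} [Fintype I] [DecidableEq I] [Ring A] [Algebra ℝ A] {w w' : I → ℝ}

/-- The standard generators of the Clifford algebra of the diagonal form with weights `w`. -/
noncomputable def stdGen (w : I → ℝ) (i : I) :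
    CliffordAlgebra (QuadraticMap.weightedSumSquares ℝ w) :=
  ι _ (Pi.single i 1)

theorem isCliffordFamily_stdGen (w : I → ℝ) : IsCliffordFamily w (stdGen w) where
  sq i := by
    rw [stdGen, ι_sq_scalar]
    simp [QuadraticMap.weightedSumSquares_apply, Pi.single_apply]
  anti i j hij := by
    refine ι_mul_ι_comm_of_isOrtho ?_
    rw [QuadraticMap.isOrtho_def]
    simp only [QuadraticMap.weightedSumSquares_apply, ← Finset.sum_add_distrib]
    refine Finset.sum_congr rfl fun k _ => ?_
    by_cases hi : k = i
    · subst hi; simp [hij]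
    · simp [hi]

/-- The linear extension of a family satisfying the Clifford relations fulfils the hypothesis of the
universal property `CliffordAlgebra.lift`. -/
theorem IsCliffordFamily.linearCombination_sq {e : I → A} (he : IsCliffordFamily w e)
    (x : I → ℝ) :
    Fintype.linearCombination ℝ e x * Fintype.linearCombination ℝ e x =
      algebraMap ℝ A (QuadraticMap.weightedSumSquares ℝ w x) := by
  have h2 : IsUnit (2 : A) := by
    have h := (IsUnit.mk0 (2 : ℝ) two_ne_zero).map (algebraMap ℝ A)
    rwa [map_ofNat] at h
  -- `2 v² = ∑ᵢ ∑ⱼ xᵢ xⱼ (eᵢ eⱼ + eⱼ eᵢ)`, and only the terms with `i = j` survive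
  have hij : ∀ i j, e i * e j + e j * e i = if i = j then algebraMap ℝ A (2 * w i) else 0 := by
    intro i j
    split_ifs with h
    · rw [← h, he.sq, ← two_mul, map_mul, map_ofNat]
    · rw [he.anti i j h, neg_add_cancel]
  apply h2.mul_left_cancel
  rw [two_mul]
  simp only [Fintype.linearCombination_apply, Finset.sum_mul_sum, smul_mul_smul_comm]
  conv_lhs => enter [2]; rw [Finset.sum_comm]
  simp only [← Finset.sum_add_distrib]
  have : ∀ i j, (x i * x j) • (e i * e j) + (x j * x i) • (e j * e i)
      = if i = j then algebraMap ℝ A (2 * (w i * (x i * x i))) else 0 := by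
    intro i j
    rw [mul_comm (x j), ← smul_add, hij]
    split_ifs with h
    · rw [← h, Algebra.smul_def, ← map_mul]
      congr 1
      ring
    · rw [smul_zero]
  simp [this, QuadraticMap.weightedSumSquares_apply, Finset.mul_sum,
    map_ofNat (algebraMap ℝ A) 2]

/-- The homomorphism out of the Clifford algebra of a diagonal form determined by the images of the
standard generators. -/
noncomputable def IsCliffordFamily.lift {e : I → A} (he : IsCliffordFamily w e) :
    CliffordAlgebra (QuadraticMap.weightedSumSquares ℝ w) →ₐ[ℝ] A :=
  CliffordAlgebra.lift _ ⟨Fintype.linearCombination ℝ e, he.linearCombination_sq⟩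

theorem IsCliffordFamily.lift_stdGen {e : I → A} (he : IsCliffordFamily w e) (i : I) :
    he.lift (stdGen w i) = e i := by
  simp [IsCliffordFamily.lift, stdGen]

theorem algHom_ext_stdGen
    {f g : CliffordAlgebra (QuadraticMap.weightedSumSquares ℝ w) →ₐ[ℝ] A}
    (h : ∀ i, f (stdGen w i) = g (stdGen w i)) : f = g := by
  apply CliffordAlgebra.hom_ext
  apply (Pi.basisFun ℝ I).ext
  intro i
  simpa [stdGen] using h i

/-- Twisting the standard generators twice by the volume element of four of them is the identity. -/
theorem lift_comp_lift {s : Fin 4 → I} {ε : ℝ} (hs : Function.Injective s)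
    (hε : ε * ε = 1) (hw : ∀ k, w (s k) = ε)
    (h : IsCliffordFamily w' (volumeTwist s (stdGen w)))
    (h' : IsCliffordFamily w (volumeTwist s (stdGen w'))) :
    h.lift.comp h'.lift = AlgHom.id ℝ _ := by
  apply algHom_ext_stdGen
  intro i
  rw [AlgHom.comp_apply, h'.lift_stdGen, map_volumeTwist]
  simp only [h.lift_stdGen]
  exact congrFun ((isCliffordFamily_stdGen w).volumeTwist_volumeTwist hs hε hw) i

/-- Reversing the signs of four equal weights `ε = ±1` of a diagonal form does not change its
Clifford algebra. -/
noncomputable def cliffordEquivOfFlip {s : Fin 4 → I} {ε : ℝ} (hs : Function.Injective s)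
    (hε : ε * ε = 1) (hw : ∀ k, w (s k) = ε) (hw' : ∀ k, w' (s k) = -ε)
    (hww' : ∀ i ∉ Set.range s, w i = w' i) :
    CliffordAlgebra (QuadraticMap.weightedSumSquares ℝ w) ≃ₐ[ℝ]
      CliffordAlgebra (QuadraticMap.weightedSumSquares ℝ w') :=
  have h : IsCliffordFamily w' (volumeTwist s (stdGen w)) :=
    (isCliffordFamily_stdGen w).volumeTwist hs hε hw hw' hww'
  have hε' : -ε * -ε = 1 := by rw [neg_mul_neg, hε]
  have h' : IsCliffordFamily w (volumeTwist s (stdGen w')) :=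
    (isCliffordFamily_stdGen w').volumeTwist hs hε' hw' (fun k => by rw [hw, neg_neg])
      fun i hi => (hww' i hi).symm
  AlgEquiv.ofAlgHom h'.lift h.lift (lift_comp_lift hs hε' hw' h' h) (lift_comp_lift hs hε hw h h')

end Diagonal

/-- `Cℓ(p, q) ≅ Cℓ(p−4, q+4)` as real algebras, for `p ≥ 4`. -/
theorem cliffordAlgebraSignature_iso_p_sub_four (p q : ℕ) (hp : 4 ≤ p) :
    Nonempty (CliffordAlgebraSignature p q ≃ₐ[ℝ] CliffordAlgebraSignature (p - 4) (q + 4)) := by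
  -- both index types are equal to `Fin n`, up to a cast
  have key : ∀ n, n = p + q → ∀ w w' : Fin n → ℝ,
      (w = fun i : Fin n => if (i : ℕ) < p then (1 : ℝ) else -1) →
      (w' = fun i : Fin n => if (i : ℕ) < p - 4 then (1 : ℝ) else -1) →
      Nonempty (CliffordAlgebra (QuadraticMap.weightedSumSquares ℝ w) ≃ₐ[ℝ]
        CliffordAlgebra (QuadraticMap.weightedSumSquares ℝ w')) := by
    rintro n hn w w' rfl rfl
    refine ⟨cliffordEquivOfFlip (s := fun k : Fin 4 => ⟨p - 4 + k, by omega⟩) (ε := 1)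
      ?_ (mul_one 1) ?_ ?_ ?_⟩
    · intro k l h
      simp only [Fin.mk.injEq] at h
      omega
    · intro k
      exact if_pos (by simp only; omega)
    · intro k
      exact if_neg (by simp only; omega)
    · intro i hi
      have h : ¬ (p - 4 ≤ i ∧ (i : ℕ) < p) := fun h =>
        hi ⟨⟨i - (p - 4), by omega⟩, Fin.ext (by simp only; omega)⟩
      split_ifs <;> first | rfl | omega
  have cast : ∀ n m, n = m → ∀ c : ℕ, Nonempty
      (CliffordAlgebra (QuadraticMap.weightedSumSquares ℝ
          (fun i : Fin n => if (i : ℕ) < c then (1 : ℝ) else -1)) ≃ₐ[ℝ]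
        CliffordAlgebra (QuadraticMap.weightedSumSquares ℝ
          (fun i : Fin m => if (i : ℕ) < c then (1 : ℝ) else -1))) := by
    rintro n _ rfl c
    exact ⟨AlgEquiv.refl⟩
  obtain ⟨f⟩ := key (p + q) rfl _ _ rfl rfl
  obtain ⟨g⟩ := cast (p + q) (p - 4 + (q + 4)) (by omega) (p - 4)
  exact ⟨f.trans g⟩
end

section
/- Let Q be a nondegenerate quadratic form on a real vector space V of even dimension 2m. Then the complexified Clifford algebra ℂ ⊗[ℝ] CliffordAlgebra Q is isomorphic as a ℂ-algebra to the full matrix algebra of (2^m) × (2^m) complex matrices. -/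
/-!
The proof reduces to a single complex form in each even dimension. Base change commutes with the
formation of the Clifford algebra, and the base change of a nondegenerate real form is a
nondegenerate complex form. Over `ℂ` nondegenerate forms of equal dimension are isometric, so `Q`
may be replaced by the orthogonal sum of `m` hyperbolic planes (`exists_split_form`).

For that form one inducts on `m`. The key step, valid over any commutative ring, is
`HyperbolicStep.equivMat`: adding a hyperbolic plane to `Q` turns the Clifford algebra of `Q` into
its `2 × 2` matrices. The isomorphism sends `(v, a, b)` to `!![v, a; b, -v]`, whose square is
`Q v + a * b`. For the inverse, the isotropic generators `e`, `f` of the plane satisfy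
`e f + f e = 1`, so that `e f`, `e`, `f`, `f e` are `2 × 2` matrix units; the elements
`v (e f - f e)` commute with them and generate a copy of the Clifford algebra of `Q`.
-/

open CliffordAlgebra TensorProduct

/-! ### Adding a hyperbolic plane -/

namespace HyperbolicStep

variable {R V : Type*} [CommRing R] [AddCommGroup V] [Module R V]

/-- The orthogonal sum of `Q` with the hyperbolic plane `(a, b) ↦ a * b`. -/
def addHyp (Q : QuadraticForm R V) : QuadraticForm R (V × (R × R)) :=
  Q.prod (QuadraticMap.linMulLin (LinearMap.fst R R R) (LinearMap.snd R R R))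

@[simp]
lemma addHyp_apply (Q : QuadraticForm R V) (w : V × (R × R)) :
    addHyp Q w = Q w.1 + w.2.1 * w.2.2 := by
  simp [addHyp]

lemma polar_addHyp (Q : QuadraticForm R V) (x y : V × (R × R)) :
    QuadraticMap.polar (addHyp Q) x y =
      QuadraticMap.polar Q x.1 y.1 + (x.2.1 * y.2.2 + x.2.2 * y.2.1) := by
  simp only [QuadraticMap.polar, addHyp_apply, Prod.fst_add, Prod.snd_add]
  ring

variable (Q : QuadraticForm R V)

/-- The linear map `(v, a, b) ↦ !![v, a; b, -v]`, whose square is the scalar `Q v + a * b`. -/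
def gamma : (V × (R × R)) →ₗ[R] Matrix (Fin 2) (Fin 2) (CliffordAlgebra Q) where
  toFun w := !![ι Q w.1, algebraMap R _ w.2.1; algebraMap R _ w.2.2, -ι Q w.1]
  map_add' x y := by
    ext i j; fin_cases i <;> fin_cases j <;> simp [add_comm]
  map_smul' r x := by
    ext i j; fin_cases i <;> fin_cases j <;> simp [Algebra.smul_def]

lemma gamma_apply (w : V × (R × R)) :
    gamma Q w = !![ι Q w.1, algebraMap R _ w.2.1; algebraMap R _ w.2.2, -ι Q w.1] := rfl

lemma gamma_sq (w : V × (R × R)) :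
    gamma Q w * gamma Q w = algebraMap R _ (addHyp Q w) := by
  have ha := Algebra.commutes w.2.1 (ι Q w.1)
  have hb := Algebra.commutes w.2.2 (ι Q w.1)
  have hab := Algebra.commutes w.2.1 (algebraMap R (CliffordAlgebra Q) w.2.2)
  rw [gamma_apply, addHyp_apply, Matrix.mul_fin_two]
  ext i j
  fin_cases i <;> fin_cases j <;>
    simp [Matrix.algebraMap_matrix_apply, ha, hb, hab, add_comm]

/-- The representation of `CliffordAlgebra (addHyp Q)` by `2 × 2` matrices extending `gamma`. -/
def toMat : CliffordAlgebra (addHyp Q) →ₐ[R] Matrix (Fin 2) (Fin 2) (CliffordAlgebra Q) :=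
  lift (addHyp Q) ⟨gamma Q, gamma_sq Q⟩

@[simp]
lemma toMat_ι (w : V × (R × R)) : toMat Q (ι _ w) = gamma Q w := by
  simp [toMat]

/-- The first isotropic generator of the hyperbolic plane. -/
def e : CliffordAlgebra (addHyp Q) := ι _ (0, 1, 0)

/-- The second isotropic generator of the hyperbolic plane. -/
def f : CliffordAlgebra (addHyp Q) := ι _ (0, 0, 1)

/-- The involution `e f - f e`, which anticommutes with the hyperbolic plane and commutes with
`V`; `toMat` sends it to `diag(1, -1)`. -/
def u : CliffordAlgebra (addHyp Q) := e Q * f Q - f Q * e Q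

lemma ee : e Q * e Q = 0 := by simp [e]

lemma ff : f Q * f Q = 0 := by simp [f]

lemma fe : f Q * e Q = 1 - e Q * f Q := by
  have h := ι_mul_ι_add_swap (Q := addHyp Q) (0, 0, 1) (0, 1, 0)
  rw [polar_addHyp] at h
  rw [eq_sub_iff_add_eq]
  simpa [e, f] using h

lemma efe : e Q * f Q * e Q = e Q := by
  rw [mul_assoc, fe, mul_sub, ← mul_assoc, ee]; simp

lemma fef : f Q * e Q * f Q = f Q := by
  rw [fe, sub_mul, mul_assoc, ff]; simp

lemma e_v (v : V) : e Q * ι (addHyp Q) (v, 0) = -(ι (addHyp Q) (v, 0) * e Q) := by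
  have h := ι_mul_ι_add_swap (Q := addHyp Q) (0, 1, 0) (v, 0)
  rw [polar_addHyp] at h
  rw [eq_neg_iff_add_eq_zero]
  simpa [e] using h

lemma f_v (v : V) : f Q * ι (addHyp Q) (v, 0) = -(ι (addHyp Q) (v, 0) * f Q) := by
  have h := ι_mul_ι_add_swap (Q := addHyp Q) (0, 0, 1) (v, 0)
  rw [polar_addHyp] at h
  rw [eq_neg_iff_add_eq_zero]
  simpa [f] using h

lemma u_e : u Q * e Q = e Q := by
  rw [u, sub_mul, efe, mul_assoc, ee]; simp

lemma e_u : e Q * u Q = -e Q := by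
  rw [u, mul_sub, ← mul_assoc, ← mul_assoc, efe, ee]; simp

lemma u_f : u Q * f Q = -f Q := by
  rw [u, sub_mul, fef, mul_assoc, ff]; simp

lemma f_u : f Q * u Q = f Q := by
  rw [u, mul_sub, ← mul_assoc, ← mul_assoc, fef, ff]; simp

lemma u_u : u Q * u Q = 1 := by
  nth_rewrite 1 [u]
  rw [sub_mul, mul_assoc, mul_assoc, f_u, e_u, mul_neg, fe]
  abel

lemma u_v (v : V) : u Q * ι (addHyp Q) (v, 0) = ι (addHyp Q) (v, 0) * u Q := by
  rw [u, sub_mul, mul_assoc, mul_assoc, f_v, e_v, mul_neg, mul_neg, ← mul_assoc, ← mul_assoc,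
    f_v, e_v]
  noncomm_ring

/-- The embedding of `CliffordAlgebra Q` into the commutant of the hyperbolic plane, obtained by
twisting each generator `v` by `u`. -/
def twist : CliffordAlgebra Q →ₐ[R] CliffordAlgebra (addHyp Q) :=
  lift Q ⟨(LinearMap.mulRight R (u Q)) ∘ₗ ι (addHyp Q) ∘ₗ LinearMap.inl R V (R × R), fun v => by
    simp only [LinearMap.comp_apply, LinearMap.mulRight_apply, LinearMap.inl_apply]
    rw [mul_assoc, ← mul_assoc (u Q), u_v, mul_assoc, u_u, mul_one, ι_sq_scalar]
    simp⟩

@[simp]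
lemma twist_ι (v : V) : twist Q (ι Q v) = ι (addHyp Q) (v, 0) * u Q := by
  simp [twist]

lemma commute_of_ι {y : CliffordAlgebra (addHyp Q)}
    (h : ∀ v, Commute y (twist Q (ι Q v))) (x : CliffordAlgebra Q) : Commute y (twist Q x) := by
  induction x using CliffordAlgebra.induction with
  | algebraMap r => rw [AlgHom.commutes]; exact (Algebra.commutes r y).symm
  | ι v => exact h v
  | mul a b ha hb => rw [map_mul]; exact ha.mul_right hb
  | add a b ha hb => rw [map_add]; exact ha.add_right hb

lemma e_twist (x : CliffordAlgebra Q) : e Q * twist Q x = twist Q x * e Q := by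
  refine commute_of_ι Q (fun v => ?_) x
  rw [twist_ι, commute_iff_eq, ← mul_assoc, e_v, neg_mul, mul_assoc, e_u, mul_assoc, u_e]
  simp

lemma f_twist (x : CliffordAlgebra Q) : f Q * twist Q x = twist Q x * f Q := by
  refine commute_of_ι Q (fun v => ?_) x
  rw [twist_ι, commute_iff_eq, ← mul_assoc, f_v, neg_mul, mul_assoc, f_u, mul_assoc, u_f]
  simp

/-- The inverse of `toMat`, with `e f`, `e`, `f`, `f e` as matrix units. -/
def ofMat (M : Matrix (Fin 2) (Fin 2) (CliffordAlgebra Q)) : CliffordAlgebra (addHyp Q) :=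
  twist Q (M 0 0) * (e Q * f Q) + twist Q (M 0 1) * e Q + twist Q (M 1 0) * f Q +
    twist Q (M 1 1) * (f Q * e Q)

lemma ι_eq (w : V × (R × R)) :
    ι (addHyp Q) w = ι (addHyp Q) (w.1, 0) + w.2.1 • e Q + w.2.2 • f Q := by
  rw [e, f, ← map_smul, ← map_smul, ← map_add, ← map_add]
  simp

/-- Matrix multiplication by `gamma Q w` corresponds under `ofMat` to left multiplication by the
generator `ι w`; this is what makes `ofMat` a left inverse of `toMat`. -/
lemma ofMat_gamma_mul (w : V × (R × R)) (M : Matrix (Fin 2) (Fin 2) (CliffordAlgebra Q)) :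
    ofMat Q (gamma Q w * M) = ι _ w * ofMat Q M := by
  have hu (x) : u Q * twist Q x = twist Q x * u Q := by
    simp only [u, sub_mul, mul_sub, mul_assoc, e_twist, f_twist]
    simp only [← mul_assoc, e_twist, f_twist]
  have hue (x) : u Q * (twist Q x * e Q) = twist Q x * e Q := by
    rw [← mul_assoc, hu, mul_assoc, u_e]
  have huf (x) : u Q * (twist Q x * f Q) = -(twist Q x * f Q) := by
    rw [← mul_assoc, hu, mul_assoc, u_f, mul_neg]
  have huef (x) : u Q * (twist Q x * (e Q * f Q)) = twist Q x * (e Q * f Q) := by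
    rw [← mul_assoc, ← mul_assoc, mul_assoc (u Q), hue, mul_assoc]
  have hufe (x) : u Q * (twist Q x * (f Q * e Q)) = -(twist Q x * (f Q * e Q)) := by
    rw [← mul_assoc, ← mul_assoc, mul_assoc (u Q), huf, neg_mul, mul_assoc]
  have he (x y) : e Q * (twist Q x * y) = twist Q x * (e Q * y) := by
    rw [← mul_assoc, e_twist, mul_assoc]
  have hf (x y) : f Q * (twist Q x * y) = twist Q x * (f Q * y) := by
    rw [← mul_assoc, f_twist, mul_assoc]
  have h1 : e Q * (e Q * f Q) = 0 := by rw [← mul_assoc, ee, zero_mul]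
  have h2 : f Q * (f Q * e Q) = 0 := by rw [← mul_assoc, ff, zero_mul]
  have h3 : e Q * (f Q * e Q) = e Q := by rw [← mul_assoc, efe]
  have h4 : f Q * (e Q * f Q) = f Q := by rw [← mul_assoc, fef]
  rw [ι_eq, gamma_apply]
  simp only [ofMat, Matrix.mul_apply, Fin.sum_univ_two, Matrix.of_apply, Matrix.cons_val_zero,
    Matrix.cons_val_one, Matrix.cons_val', Matrix.cons_val_fin_one, map_add, map_mul, twist_ι,
    ← Algebra.smul_def, map_smul, map_neg, add_mul, mul_add, neg_mul, smul_mul_assoc,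
    he, hf, h1, h2, h3, h4, ee, ff, mul_assoc, hue, huf, huef, hufe, mul_neg, mul_zero, smul_zero]
  abel

lemma ofMat_toMat (x : CliffordAlgebra (addHyp Q)) : ofMat Q (toMat Q x) = x := by
  induction x using CliffordAlgebra.left_induction with
  | algebraMap r =>
    rw [AlgHom.commutes]
    simp [ofMat, Matrix.algebraMap_matrix_apply, fe, ← mul_add]
  | add x y hx hy =>
    conv_rhs => rw [← hx, ← hy]
    simp only [ofMat, map_add, Matrix.add_apply, add_mul]
    abel
  | ι_mul x w hx => rw [map_mul, toMat_ι, ofMat_gamma_mul, hx]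

lemma toMat_e : toMat Q (e Q) = !![0, 1; 0, 0] := by simp [e, gamma_apply]

lemma toMat_f : toMat Q (f Q) = !![0, 0; 1, 0] := by simp [f, gamma_apply]

lemma toMat_twist (x : CliffordAlgebra Q) : toMat Q (twist Q x) = !![x, 0; 0, x] := by
  induction x using CliffordAlgebra.induction with
  | algebraMap r =>
    rw [AlgHom.commutes, AlgHom.commutes]
    ext i j; fin_cases i <;> fin_cases j <;> simp [Matrix.algebraMap_matrix_apply]
  | ι v =>
    rw [twist_ι, map_mul, u, map_sub, map_mul, map_mul, toMat_e, toMat_f, toMat_ι, gamma_apply]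
    ext i j; fin_cases i <;> fin_cases j <;> simp
  | mul a b ha hb => rw [map_mul, map_mul, ha, hb, Matrix.mul_fin_two]; simp
  | add a b ha hb => rw [map_add, map_add, ha, hb]; simp

lemma toMat_ofMat (M : Matrix (Fin 2) (Fin 2) (CliffordAlgebra Q)) : toMat Q (ofMat Q M) = M := by
  simp only [ofMat, map_add, map_mul, toMat_twist, toMat_e, toMat_f]
  ext i j; fin_cases i <;> fin_cases j <;> simp

/-- Adding a hyperbolic plane to `Q` replaces the Clifford algebra by its `2 × 2` matrices. -/
noncomputable def equivMat :
    CliffordAlgebra (addHyp Q) ≃ₐ[R] Matrix (Fin 2) (Fin 2) (CliffordAlgebra Q) :=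
  AlgEquiv.ofBijective (toMat Q)
    ⟨Function.LeftInverse.injective (ofMat_toMat Q),
      Function.RightInverse.surjective (toMat_ofMat Q)⟩

end HyperbolicStep

/-! ### Nondegenerate complex forms -/

open HyperbolicStep

/-- In each even dimension there is a nondegenerate complex form whose Clifford algebra is a full
matrix algebra: the orthogonal sum of `m` hyperbolic planes. -/
lemma exists_split_form (m : ℕ) :
    ∃ (W : Type) (_ : AddCommGroup W) (_ : Module ℂ W) (_ : FiniteDimensional ℂ W)
      (Q : QuadraticForm ℂ W), (QuadraticMap.polarBilin Q).SeparatingLeft ∧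
        Module.finrank ℂ W = 2 * m ∧
        Nonempty (CliffordAlgebra Q ≃ₐ[ℂ] Matrix (Fin (2 ^ m)) (Fin (2 ^ m)) ℂ) := by
  induction m with
  | zero =>
    refine ⟨Unit, inferInstance, inferInstance, inferInstance, 0, fun _ _ => rfl,
      Module.finrank_zero_of_subsingleton, ?_⟩
    have h : Function.Bijective (Algebra.ofId ℂ (Matrix (Fin 1) (Fin 1) ℂ)) := by
      refine ⟨(algebraMap ℂ (Matrix (Fin 1) (Fin 1) ℂ)).injective, fun M => ⟨M 0 0, ?_⟩⟩
      ext i j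
      fin_cases i; fin_cases j
      simp [Algebra.ofId_apply, Matrix.algebraMap_matrix_apply]
    exact ⟨CliffordAlgebraRing.equiv.trans (AlgEquiv.ofBijective _ h)⟩
  | succ m ih =>
    obtain ⟨W, _, _, _, Q, hQ, hW, ⟨φ⟩⟩ := ih
    refine ⟨W × (ℂ × ℂ), inferInstance, inferInstance, inferInstance, addHyp Q, ?_, ?_, ⟨?_⟩⟩
    · rintro ⟨v, a, b⟩ h
      simp only [QuadraticMap.polarBilin_apply_apply, polar_addHyp] at h
      have hv : v = 0 := hQ v fun y => by simpa using h (y, 0, 0)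
      have ha : a = 0 := by simpa using h (0, 0, 1)
      have hb : b = 0 := by simpa using h (0, 1, 0)
      simp [hv, ha, hb]
    · simp [hW]; ring
    · exact ((equivMat Q).trans φ.mapMatrix).trans
        ((Matrix.compAlgEquiv (Fin 2) (Fin (2 ^ m)) ℂ ℂ).trans
          (Matrix.reindexAlgEquiv ℂ ℂ (finProdFinEquiv.trans (finCongr (by ring)))))

/-- Over `ℂ` all nondegenerate forms of a given dimension are sums of squares. -/
lemma equivalent_sum_sq {W : Type*} [AddCommGroup W] [Module ℂ W] [FiniteDimensional ℂ W]
    (Q : QuadraticForm ℂ W) (hQ : (QuadraticMap.polarBilin Q).SeparatingLeft) {n : ℕ}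
    (hn : Module.finrank ℂ W = n) :
    Q.Equivalent (QuadraticMap.weightedSumSquares ℂ (1 : Fin n → ℂ)) := by
  subst hn
  refine QuadraticForm.equivalent_weightedSumSquares_of_isAlgClosed Q fun x hx => hQ x fun y => ?_
  rw [← QuadraticMap.two_nsmul_associated ℂ, LinearMap.smul_apply, LinearMap.smul_apply]
  exact (congrArg (2 • ·) (hx y)).trans (smul_zero 2)

lemma separatingLeft_baseChange {V : Type*} [AddCommGroup V] [Module ℝ V] [FiniteDimensional ℝ V]
    (Q : QuadraticForm ℝ V) (hQ : (QuadraticMap.polarBilin Q).Nondegenerate) :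
    (QuadraticMap.polarBilin (Q.baseChange ℂ)).SeparatingLeft := by
  let b := Module.finBasis ℝ V
  rw [QuadraticForm.polarBilin_baseChange]
  have hdet := (LinearMap.BilinForm.nondegenerate_iff_det_ne_zero b).1 hQ
  refine ((LinearMap.BilinForm.nondegenerate_iff_det_ne_zero
    (b.baseChange ℂ)).2 ?_).1
  have : LinearMap.BilinForm.toMatrix (b.baseChange ℂ)
      (LinearMap.BilinForm.baseChange ℂ (QuadraticMap.polarBilin Q)) =
      (algebraMap ℝ ℂ).mapMatrix (LinearMap.BilinForm.toMatrix b (QuadraticMap.polarBilin Q)) := by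
    ext i j
    simp [LinearMap.BilinForm.toMatrix_apply, Algebra.smul_def]
  rw [this, ← RingHom.map_det]
  simpa using hdet

/-- The complexified Clifford algebra of a nondegenerate quadratic form on a real
vector space of even dimension `2m` is the full matrix algebra of `2^m × 2^m`
complex matrices. -/
theorem complexified_cliffordAlgebra_iso_matrix
    (V : Type*) [AddCommGroup V] [Module ℝ V] [FiniteDimensional ℝ V]
    (Q : QuadraticForm ℝ V)
    (hQ : (QuadraticMap.polarBilin Q).Nondegenerate)
    (m : ℕ) (hdim : Module.finrank ℝ V = 2 * m) :
    Nonempty ((ℂ ⊗[ℝ] CliffordAlgebra Q) ≃ₐ[ℂ]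
      Matrix (Fin (2 ^ m)) (Fin (2 ^ m)) ℂ) := by
  obtain ⟨W, _, _, _, Q', hQ', hW, ⟨φ⟩⟩ := exists_split_form m
  obtain ⟨i⟩ := equivalent_sum_sq (Q.baseChange ℂ) (separatingLeft_baseChange Q hQ)
    (Module.finrank_baseChange.trans hdim)
  obtain ⟨j⟩ := equivalent_sum_sq Q' hQ' hW
  exact ⟨(equivBaseChange ℂ Q).symm.trans ((equivOfIsometry (i.trans j.symm)).trans φ)⟩
end

section
/- Let Q be a nondegenerate quadratic form on a real vector space V of even dimension, and let A = ℂ ⊗[ℝ] CliffordAlgebra Q be the complexified Clifford algebra. Then any two simple (left) A-modules are isomorphic as A-modules: the irreducible representation of the complex Clifford algebra of even rank is unique up to equivalence. -/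
/-!
The algebra `A = ℂ ⊗[ℝ] CliffordAlgebra Q` is simple and Artinian, so up to isomorphism it has a
single simple module (`IsSimpleRing.isIsotypic`).

For simplicity, diagonalise `Q`: an orthogonal basis of `V` gives generators `e i` of `A` that
anticommute pairwise and square to nonzero scalars. Products of generators (`mon e l`, for a list
`l` of indices) depend, up to a nonzero scalar, only on the set of indices of odd multiplicity
(`exists_mon_eq_smul_mon`), so `A` is spanned by finitely many monomials. Moving `e i` past `mon e l`
costs the sign `(-1) ^ (l.length + l.count i)`. Since the number of generators is even, a monomial
whose multiplicities are not all even anticommutes with some `e i` (`exists_odd_length_add_count`).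
Hence, in a two-sided ideal, the map `y ↦ y + e i * y * (e i)⁻¹` removes that monomial from a linear
combination while doubling the scalar term (`algebraMap_mem_of_add_sum_mem`). Given a nonzero element
of an ideal, multiplying it by a monomial occurring in it produces a nonzero scalar term, and removing
all other terms leaves a nonzero scalar in the ideal. No linear independence of the monomials is
required.
-/

open CliffordAlgebra TensorProduct

namespace CliffordSimple

section Monomials

variable {K A ι : Type*} [Field K] [Ring A] [Algebra K A]

/-- The product of the generators `e i`, with `i` running through the list `l` in order. -/
def mon (e : ι → A) (l : List ι) : A := (l.map e).prod

@[simp] lemma mon_nil (e : ι → A) : mon e [] = 1 := rfl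

@[simp] lemma mon_cons (e : ι → A) (i : ι) (l : List ι) : mon e (i :: l) = e i * mon e l := by
  simp [mon]

@[simp] lemma mon_append (e : ι → A) (l l' : List ι) :
    mon e (l ++ l') = mon e l * mon e l' := by
  simp [mon]

variable [DecidableEq ι] {e : ι → A} {q : ι → K}

lemma mul_mon (hanti : ∀ i j, i ≠ j → e i * e j = -(e j * e i)) (i : ι) (l : List ι) :
    e i * mon e l = (-1 : K) ^ (l.length + l.count i) • (mon e l * e i) := by
  induction l with
  | nil => simp
  | cons j l ih =>
    by_cases h : j = i
    · subst h
      rw [mon_cons, mul_assoc, ih, List.length_cons, List.count_cons_self, mul_smul_comm]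
      congr 1
      ring
    · rw [mon_cons, ← mul_assoc, hanti i j (Ne.symm h), List.length_cons,
        List.count_cons_of_ne h, neg_mul, mul_assoc, ih, mul_smul_comm, mul_assoc, ← neg_smul]
      congr 1
      ring

lemma exists_mon_eq_smul_of_perm (hanti : ∀ i j, i ≠ j → e i * e j = -(e j * e i))
    {l l' : List ι} (h : l.Perm l') : ∃ c : K, c ≠ 0 ∧ mon e l = c • mon e l' := by
  induction h with
  | nil => exact ⟨1, one_ne_zero, by simp⟩
  | cons i _ ih =>
    obtain ⟨c, hc, h⟩ := ih
    exact ⟨c, hc, by simp [h]⟩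
  | swap i j l =>
    by_cases hij : i = j
    · exact ⟨1, one_ne_zero, by simp [hij]⟩
    · refine ⟨-1, by simp, ?_⟩
      simp only [mon_cons, ← mul_assoc]
      rw [hanti j i (Ne.symm hij)]
      simp
  | trans _ _ ih ih' =>
    obtain ⟨c, hc, h⟩ := ih
    obtain ⟨c', hc', h'⟩ := ih'
    exact ⟨c * c', mul_ne_zero hc hc', by rw [h, h', smul_smul]⟩

lemma exists_mon_eq_algebraMap (hanti : ∀ i j, i ≠ j → e i * e j = -(e j * e i))
    (hsq : ∀ i, e i * e i = algebraMap K A (q i)) (hq : ∀ i, q i ≠ 0) (l : List ι)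
    (hl : ∀ i, Even (l.count i)) : ∃ c : K, c ≠ 0 ∧ mon e l = algebraMap K A c := by
  induction hn : l.length using Nat.strong_induction_on generalizing l with
  | _ n ih =>
    cases l with
    | nil => exact ⟨1, one_ne_zero, by simp⟩
    | cons i t =>
      -- the first index `i` recurs in the tail; bring the two copies together and cancel them
      have hi := hl i
      rw [List.count_cons_self] at hi
      have hmem : i ∈ t := by
        rw [← List.count_pos_iff]
        grind
      have hp := List.perm_cons_erase hmem
      obtain ⟨c, hc, h⟩ := exists_mon_eq_smul_of_perm (K := K) hanti hp
      have hlen := hp.length_eq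
      obtain ⟨d, hd, h'⟩ := ih (t.erase i).length (by grind) (t.erase i) (fun j => by
        have h1 := hl j
        have h2 := hp.count_eq j
        by_cases hj : i = j
        · subst hj
          simp only [List.count_cons_self] at h1 h2
          grind
        · simp only [List.count_cons_of_ne hj] at h1 h2
          rwa [← h2]) rfl
      refine ⟨c * q i * d, mul_ne_zero (mul_ne_zero hc (hq i)) hd, ?_⟩
      rw [mon_cons, h, mon_cons, mul_smul_comm, ← mul_assoc, hsq, h', Algebra.smul_def]
      simp [mul_assoc]

/-- Monomials with the same multiplicities modulo 2 are proportional. -/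
lemma exists_mon_eq_smul_mon (hanti : ∀ i j, i ≠ j → e i * e j = -(e j * e i))
    (hsq : ∀ i, e i * e i = algebraMap K A (q i)) (hq : ∀ i, q i ≠ 0) (l l' : List ι)
    (hl : ∀ i, Even (l.count i + l'.count i)) : ∃ c : K, mon e l = c • mon e l' := by
  -- compare `l ++ l'.reverse ++ l'`, in which both halves reduce to scalars, bracketed both ways
  obtain ⟨a, -, h⟩ := exists_mon_eq_algebraMap hanti hsq hq (l ++ l'.reverse)
    (by simpa [List.count_append] using hl)
  obtain ⟨b, hb, h'⟩ := exists_mon_eq_algebraMap hanti hsq hq (l'.reverse ++ l')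
    (by simp [List.count_append])
  refine ⟨b⁻¹ * a, ?_⟩
  rw [mul_smul, Algebra.smul_def a, ← h, mon_append, mul_assoc, ← mon_append, h',
    ← Algebra.commutes, ← Algebra.smul_def, smul_smul, inv_mul_cancel₀ hb, one_smul]

/-- With an even number of generators, a monomial with some odd multiplicity anticommutes with at
least one generator: otherwise every multiplicity would be congruent modulo 2 to the length, and the
length, being the sum of an even number of them, would be even. -/
lemma exists_odd_length_add_count [Fintype ι] (heven : Even (Fintype.card ι)) (l : List ι)
    (hl : ∃ i, Odd (l.count i)) : ∃ i, Odd (l.length + l.count i) := by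
  by_contra! h
  simp only [Nat.not_odd_iff_even] at h
  have hsum : ∑ i, l.count i = l.length := by
    simpa using Multiset.sum_count_eq_card (s := Finset.univ) (m := (l : Multiset ι)) (by simp)
  have h1 : Even (∑ i, (l.length + l.count i)) := Finset.even_sum _ fun i _ => h i
  rw [Finset.sum_add_distrib, hsum, Finset.sum_const, Finset.card_univ, smul_eq_mul] at h1
  obtain ⟨i, hi⟩ := hl
  have h2 := h i
  have h3 : Even (Fintype.card ι * l.length) := heven.mul_right _
  grind

/-- In a two-sided ideal, a scalar can be separated from any combination of monomials each of which
anticommutes with some generator. -/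
lemma algebraMap_mem_of_add_sum_mem (h2 : (2 : K) ≠ 0)
    (hanti : ∀ i j, i ≠ j → e i * e j = -(e j * e i))
    (hsq : ∀ i, e i * e i = algebraMap K A (q i)) (hq : ∀ i, q i ≠ 0)
    (I : TwoSidedIdeal A) {κ : Type*} (T : Finset κ) (m : κ → List ι)
    (hm : ∀ k ∈ T, ∃ i, Odd ((m k).length + (m k).count i)) (c : κ → K) (a : K)
    (h : algebraMap K A a + ∑ k ∈ T, c k • mon e (m k) ∈ I) : algebraMap K A a ∈ I := by
  classical
  induction T using Finset.induction_on generalizing c a with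
  | empty => simpa using h
  | insert k T hk ih =>
    obtain ⟨i, hi⟩ := hm k (Finset.mem_insert_self _ _)
    have hconj : ∀ l : List ι, e i * mon e l * ((q i)⁻¹ • e i)
        = (-1 : K) ^ (l.length + l.count i) • mon e l := fun l => by
      rw [mul_mon (K := K) hanti, mul_smul_comm, smul_mul_assoc, mul_assoc, hsq, ← Algebra.commutes,
        ← Algebra.smul_def, smul_smul, smul_smul, mul_comm _ (q i), ← mul_assoc,
        mul_inv_cancel₀ (hq i), one_mul]
    have h' := I.add_mem h (I.mul_mem_right _ ((q i)⁻¹ • e i) (I.mul_mem_left (e i) _ h))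
    have key := ih (fun k' hk' => hm k' (Finset.mem_insert_of_mem hk'))
      (fun k' => c k' * (1 + (-1 : K) ^ ((m k').length + (m k').count i))) (2 * a) (by
        convert h' using 1
        have h0 : e i * algebraMap K A a * ((q i)⁻¹ • e i) = algebraMap K A a := by
          have := hconj []
          simp only [mon_nil, mul_one, List.length_nil, List.count_nil, add_zero, pow_zero,
            one_smul] at this
          rw [← Algebra.commutes, mul_assoc, this, mul_one]
        rw [Finset.sum_insert hk, mul_add, mul_add, add_mul, add_mul, h0, Finset.mul_sum,
          Finset.sum_mul, mul_smul_comm (c k), smul_mul_assoc (c k), hconj, hi.neg_one_pow]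
        simp only [mul_smul_comm (c _), smul_mul_assoc (c _), hconj, mul_add, add_smul, mul_one,
          mul_smul, Finset.sum_add_distrib, two_mul, map_add, neg_smul, one_smul, smul_neg]
        abel)
    have := I.mul_mem_left (algebraMap K A 2⁻¹) _ key
    rwa [← map_mul, ← mul_assoc, inv_mul_cancel₀ h2, one_mul] at this

lemma span_mon_eq_top [Fintype ι] (hanti : ∀ i j, i ≠ j → e i * e j = -(e j * e i))
    (hsq : ∀ i, e i * e i = algebraMap K A (q i)) (hq : ∀ i, q i ≠ 0)
    (hgen : Algebra.adjoin K (Set.range e) = ⊤) :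
    Submodule.span K (Set.range fun S : Finset ι => mon e S.toList) = ⊤ := by
  rw [← Algebra.top_toSubmodule, ← hgen, Algebra.adjoin_eq_span]
  apply le_antisymm
  · refine Submodule.span_mono ?_
    rintro _ ⟨S, rfl⟩
    refine Submonoid.list_prod_mem _ fun x hx => ?_
    obtain ⟨i, -, rfl⟩ := List.mem_map.mp hx
    exact Submonoid.subset_closure ⟨i, rfl⟩
  · refine Submodule.span_le.mpr fun x hx => ?_
    obtain ⟨l₀, hl₀, rfl⟩ := Submonoid.exists_list_of_mem_closure hx
    obtain ⟨l, rfl⟩ : ∃ l : List ι, l.map e = l₀ := by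
      have : l₀ ∈ Set.range (List.map e) := by
        rw [Set.range_list_map]
        exact hl₀
      exact this
    obtain ⟨c, hc⟩ := exists_mon_eq_smul_mon hanti hsq hq l
      (Finset.univ.filter fun i => Odd (l.count i)).toList (fun i => by
        rw [(Finset.nodup_toList _).count]
        simp only [Finset.mem_toList, Finset.mem_filter, Finset.mem_univ, true_and]
        split_ifs <;> grind)
    change mon e l ∈ _
    rw [hc]
    exact Submodule.smul_mem _ _ (Submodule.subset_span ⟨_, rfl⟩)

/-- An algebra generated by an even number of anticommuting elements with nonzero scalar squares is
simple. -/
lemma isSimpleRing_of_generators [Fintype ι] [Nontrivial A] (h2 : (2 : K) ≠ 0)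
    (heven : Even (Fintype.card ι)) (hanti : ∀ i j, i ≠ j → e i * e j = -(e j * e i))
    (hsq : ∀ i, e i * e i = algebraMap K A (q i)) (hq : ∀ i, q i ≠ 0)
    (hgen : Algebra.adjoin K (Set.range e) = ⊤) : IsSimpleRing A := by
  refine ⟨{ eq_bot_or_eq_top := fun I => or_iff_not_imp_left.mpr fun hI => ?_ }⟩
  obtain ⟨x, hxI, hx⟩ : ∃ x ∈ I, x ≠ 0 := by
    by_contra! h
    exact hI (le_bot_iff.mp fun x hx => by simpa using h x hx)
  have hxs : x ∈ Submodule.span K (Set.range fun S : Finset ι => mon e S.toList) := by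
    rw [span_mon_eq_top hanti hsq hq hgen]
    trivial
  obtain ⟨c, rfl⟩ := (Submodule.mem_span_range_iff_exists_fun K).mp hxs
  obtain ⟨S, hS⟩ : ∃ S, c S ≠ 0 := by
    by_contra! h
    exact hx (by simp [h])
  obtain ⟨b, hb, hbS⟩ := exists_mon_eq_algebraMap hanti hsq hq (S.toList ++ S.toList)
    (by simp [List.count_append])
  have hmem : algebraMap K A (c S * b) ∈ I := by
    refine algebraMap_mem_of_add_sum_mem h2 hanti hsq hq I (Finset.univ.erase S)
      (fun T => T.toList ++ S.toList) (fun T hT => ?_) c (c S * b) ?_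
    · apply exists_odd_length_add_count heven
      by_contra! h
      refine Finset.ne_of_mem_erase hT (Finset.ext fun i => ?_)
      have hi := h i
      rw [List.count_append, (Finset.nodup_toList _).count, (Finset.nodup_toList _).count] at hi
      simp only [Finset.mem_toList] at hi
      split_ifs at hi <;> simp_all
    · have := I.mul_mem_right _ (mon e S.toList) hxI
      rw [Finset.sum_mul, ← Finset.add_sum_erase _ _ (Finset.mem_univ S), smul_mul_assoc,
        ← mon_append, hbS, Algebra.smul_def, ← map_mul] at this
      simpa only [mon_append, smul_mul_assoc] using this
  rw [← TwoSidedIdeal.one_mem_iff]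
  have := I.mul_mem_left (algebraMap K A (c S * b)⁻¹) _ hmem
  rwa [← map_mul, inv_mul_cancel₀ (mul_ne_zero hS hb), map_one] at this

end Monomials

/-- The complexified Clifford algebra is generated by the images of an orthogonal basis of `V`. -/
lemma exists_generators (V : Type*) [AddCommGroup V] [Module ℝ V] [FiniteDimensional ℝ V]
    (Q : QuadraticForm ℝ V) (hQ : (QuadraticMap.polarBilin Q).Nondegenerate) :
    ∃ (e : Fin (Module.finrank ℝ V) → ℂ ⊗[ℝ] CliffordAlgebra Q)
      (q : Fin (Module.finrank ℝ V) → ℂ),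
      (∀ i j, i ≠ j → e i * e j = -(e j * e i)) ∧
      (∀ i, e i * e i = algebraMap ℂ (ℂ ⊗[ℝ] CliffordAlgebra Q) (q i)) ∧ (∀ i, q i ≠ 0) ∧
      Algebra.adjoin ℂ (Set.range e) = ⊤ := by
  obtain ⟨v, hv⟩ := LinearMap.BilinForm.exists_orthogonal_basis
    (B := QuadraticMap.polarBilin Q) ⟨fun x y => QuadraticMap.polar_comm Q x y⟩
  refine ⟨fun i => 1 ⊗ₜ ι Q (v i), fun i => (Q (v i) : ℂ), fun i j hij => ?_, fun i => ?_,
    fun i => ?_, ?_⟩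
  · have h : QuadraticMap.polar Q (v i) (v j) = 0 := hv hij
    have h' := ι_mul_ι_add_swap (Q := Q) (v i) (v j)
    rw [h, map_zero] at h'
    rw [Algebra.TensorProduct.tmul_mul_tmul, Algebra.TensorProduct.tmul_mul_tmul,
      eq_neg_of_add_eq_zero_left h', TensorProduct.tmul_neg]
  · rw [Algebra.TensorProduct.tmul_mul_tmul, ι_sq_scalar, Algebra.algebraMap_eq_smul_one,
      TensorProduct.tmul_smul, TensorProduct.smul_tmul', Algebra.TensorProduct.algebraMap_apply]
    simp
  · have := hv.not_isOrtho_basis_self_of_separatingLeft hQ.1 i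
    rw [QuadraticMap.polarBilin_apply_apply, QuadraticMap.polar_self] at this
    simpa using this
  · have h : Algebra.adjoin ℝ (Set.range fun i => ι Q (v i)) = ⊤ := by
      rw [eq_top_iff, ← adjoin_range_ι, Algebra.adjoin_le_iff]
      rintro _ ⟨x, rfl⟩
      rw [← v.sum_repr x, map_sum]
      refine Subalgebra.sum_mem _ fun i _ => ?_
      rw [map_smul]
      exact Subalgebra.smul_mem _ (Algebra.subset_adjoin (Set.mem_range_self i)) _
    have := Algebra.TensorProduct.adjoin_one_tmul_image_eq_top (A := ℂ) _ h
    rwa [← Set.range_comp] at this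

end CliffordSimple

/-- The irreducible representation of the complexified Clifford algebra of a
nondegenerate quadratic form of even rank is unique up to equivalence: any two
simple modules over `ℂ ⊗[ℝ] CliffordAlgebra Q` are isomorphic. -/
theorem simple_modules_iso_of_even_rank
    (V : Type*) [AddCommGroup V] [Module ℝ V] [FiniteDimensional ℝ V]
    (Q : QuadraticForm ℝ V)
    (hQ : (QuadraticMap.polarBilin Q).Nondegenerate)
    (hdim : Even (Module.finrank ℝ V))
    (M N : Type*) [AddCommGroup M] [AddCommGroup N]
    [Module (ℂ ⊗[ℝ] CliffordAlgebra Q) M] [Module (ℂ ⊗[ℝ] CliffordAlgebra Q) N]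
    [IsSimpleModule (ℂ ⊗[ℝ] CliffordAlgebra Q) M]
    [IsSimpleModule (ℂ ⊗[ℝ] CliffordAlgebra Q) N] :
    Nonempty (M ≃ₗ[ℂ ⊗[ℝ] CliffordAlgebra Q] N) := by
  obtain ⟨e, q, hanti, hsq, hq, hgen⟩ := CliffordSimple.exists_generators V Q hQ
  have : Nontrivial M := IsSimpleModule.nontrivial (ℂ ⊗[ℝ] CliffordAlgebra Q) M
  have : Nontrivial (ℂ ⊗[ℝ] CliffordAlgebra Q) := Module.nontrivial _ M
  have : IsSimpleRing (ℂ ⊗[ℝ] CliffordAlgebra Q) :=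
    CliffordSimple.isSimpleRing_of_generators two_ne_zero (by simpa using hdim) hanti hsq hq hgen
  have : Module.Finite ℂ (ℂ ⊗[ℝ] CliffordAlgebra Q) :=
    Module.finite_def.mpr (Submodule.fg_def.mpr ⟨_, Set.finite_range _,
      CliffordSimple.span_mon_eq_top hanti hsq hq hgen⟩)
  have : IsArtinianRing (ℂ ⊗[ℝ] CliffordAlgebra Q) := IsArtinianRing.of_finite ℂ _
  -- both modules are isomorphic to minimal left ideals, and these are all isomorphic to each other
  obtain ⟨I, ⟨f⟩⟩ :=
    IsSemisimpleRing.exists_linearEquiv_ideal_of_isSimpleModule (ℂ ⊗[ℝ] CliffordAlgebra Q) M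
  obtain ⟨J, ⟨g⟩⟩ :=
    IsSemisimpleRing.exists_linearEquiv_ideal_of_isSimpleModule (ℂ ⊗[ℝ] CliffordAlgebra Q) N
  have := IsSimpleModule.congr f.symm
  have := IsSimpleModule.congr g.symm
  obtain ⟨h⟩ := IsSimpleRing.isIsotypic _ (ℂ ⊗[ℝ] CliffordAlgebra Q) J I
  exact ⟨f.trans (h.trans g.symm)⟩
end

section
/- Let Q be a nondegenerate quadratic form on a real vector space V of odd dimension, and let A = ℂ ⊗[ℝ] CliffordAlgebra Q be the complexified Clifford algebra. Then there exist two simple (left) A-modules M₁ and M₂ which are not isomorphic as A-modules, and every simple A-module is isomorphic either to M₁ or to M₂: the complex Clifford algebra of odd rank has exactly two inequivalent irreducible representations. -/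
/-!
An orthogonal basis of `V`, rescaled by complex square roots, gives pairwise anticommuting
generators `γ i` of `A = ℂ ⊗ CliffordAlgebra Q` with `γ i * γ i = 1`. The monomials `γ_S`, for
`S` a set of indices, span `A`, and conjugation by `γ i` multiplies each of them by a sign.

The number of generators being odd, the product `ω` of all of them is central, and a multiple
`w` of it satisfies `w * w = 1`. Grade involution sends `w` to `-w`, so `w` is neither `1` nor
`-1`, and both central idempotents `(1 ± w) / 2` are nonzero.

The main point (`exists_central`) is that every nonzero two-sided ideal contains a nonzero
element of `ℂ 1 + ℂ w`: starting from any nonzero element of the ideal, conjugation by the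
`γ i` separates its monomials, until at most two, with complementary index sets, are left. Only
the spanning property of the monomials is used here, not their linear independence.

As `A` is artinian, there are simple left ideals `I₁` and `I₂` on which `w` acts by `1` and by
`-1`; they are not isomorphic. On a simple module `M` the element `w` acts by a sign, say `1`.
The annihilator of `M` meets the block `A (1 + w)` in a two-sided ideal, which is zero by
`exists_central` since `1 + w` does not annihilate `M`. So `I₁` does not annihilate `M`, and
some map `x ↦ x • m` from `I₁` to `M` is nonzero, hence an isomorphism by Schur's lemma.
-/

open CliffordAlgebra TensorProduct

namespace OddClifford

/-! ### Words in anticommuting square roots of one -/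

section Words

variable {ι A : Type*} [Ring A]

/-- The product of the generators `γ i` along a list of indices. -/
def word (γ : ι → A) (l : List ι) : A := (l.map γ).prod

/-- The monomial `γ_S`: the product of the `γ i` for `i ∈ S`, in the (arbitrary) order of
`S.toList`. Another order only changes the sign, see `word_perm`. -/
noncomputable def mono (γ : ι → A) (S : Finset ι) : A := word γ S.toList

@[simp] lemma word_nil (γ : ι → A) : word γ [] = 1 := rfl

@[simp] lemma word_cons (γ : ι → A) (i : ι) (l : List ι) :
    word γ (i :: l) = γ i * word γ l := by simp [word]

lemma word_append (γ : ι → A) (l l' : List ι) :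
    word γ (l ++ l') = word γ l * word γ l' := by simp [word]

variable {γ : ι → A}

lemma word_perm (h2 : ∀ i j, i ≠ j → γ i * γ j = -(γ j * γ i)) {l l' : List ι}
    (h : l.Perm l') : word γ l = word γ l' ∨ word γ l = -word γ l' := by
  induction h with
  | nil => simp
  | cons x _ ih => rcases ih with h | h <;> simp [h]
  | swap x y l =>
    by_cases hxy : x = y
    · simp [hxy]
    · right
      simp only [word_cons, ← mul_assoc]
      rw [h2 y x (Ne.symm hxy), neg_mul]
  | trans _ _ ih ih' =>
    rcases ih with h | h <;> rcases ih' with h' | h' <;> simp [h, h']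

lemma word_mul_reverse (h1 : ∀ i, γ i * γ i = 1) (l : List ι) :
    word γ l * word γ l.reverse = 1 := by
  induction l with
  | nil => simp
  | cons i l ih =>
    rw [List.reverse_cons, word_append, word_cons, word_cons, word_nil, mul_one,
      mul_assoc, ← mul_assoc (word γ l), ih, one_mul, h1]

variable [DecidableEq ι]

/-- Every word equals, up to sign, a monomial: reorder the letters and cancel repetitions. -/
lemma exists_mono (h1 : ∀ i, γ i * γ i = 1) (h2 : ∀ i j, i ≠ j → γ i * γ j = -(γ j * γ i))
    (l : List ι) : ∃ S : Finset ι, word γ l = mono γ S ∨ word γ l = -mono γ S := by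
  suffices h : ∃ l' : List ι, l'.Nodup ∧ (word γ l = word γ l' ∨ word γ l = -word γ l') by
    obtain ⟨l', hn, h⟩ := h
    have hp : l'.Perm l'.toFinset.toList := (List.toFinset_toList hn).symm
    refine ⟨l'.toFinset, ?_⟩
    unfold mono
    rcases h with h | h <;> rcases word_perm h2 hp with h' | h' <;> simp [h, h']
  induction l with
  | nil => exact ⟨[], by simp, by simp⟩
  | cons i l ih =>
    obtain ⟨l', hn, h⟩ := ih
    by_cases hi : i ∈ l'
    · refine ⟨l'.erase i, hn.erase i, ?_⟩
      have hp := word_perm h2 (List.perm_cons_erase hi)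
      rw [word_cons] at hp
      rw [word_cons]
      rcases h with h | h <;> rcases hp with h' | h' <;>
        simp [h, h', ← mul_assoc, h1]
    · refine ⟨i :: l', by simp [hi, hn], ?_⟩
      rcases h with h | h <;> simp [h]

variable [Algebra ℂ A]

lemma conj_word (h1 : ∀ i, γ i * γ i = 1) (h2 : ∀ i j, i ≠ j → γ i * γ j = -(γ j * γ i))
    (i : ι) (l : List ι) :
    γ i * word γ l * γ i = ((-1 : ℂ) ^ l.countP (· ≠ i)) • word γ l := by
  induction l with
  | nil => simp [h1]
  | cons j l ih =>
    by_cases hj : j = i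
    · subst hj
      have : word γ l * γ j = γ j * ((-1 : ℂ) ^ l.countP (· ≠ j)) • word γ l := by
        rw [← ih, ← mul_assoc, ← mul_assoc, h1, one_mul]
      rw [word_cons, ← mul_assoc, h1, one_mul, this]
      simp
    · rw [word_cons, ← mul_assoc, h2 i j (Ne.symm hj), neg_mul, neg_mul, mul_assoc, mul_assoc,
        ← mul_assoc (γ i), ih]
      simp [hj, pow_succ]

lemma conj_mono (h1 : ∀ i, γ i * γ i = 1) (h2 : ∀ i j, i ≠ j → γ i * γ j = -(γ j * γ i))
    (i : ι) (S : Finset ι) :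
    γ i * mono γ S * γ i = ((-1 : ℂ) ^ (S.erase i).card) • mono γ S := by
  have : S.toList.countP (· ≠ i) = (S.erase i).card := by
    rw [← Multiset.coe_countP, Finset.coe_toList, Multiset.countP_eq_card_filter,
      ← Finset.filter_ne']
    rfl
  rw [mono, conj_word h1 h2, this]

lemma span_mono (h1 : ∀ i, γ i * γ i = 1) (h2 : ∀ i j, i ≠ j → γ i * γ j = -(γ j * γ i))
    (hs : Algebra.adjoin ℂ (Set.range γ) = ⊤) :
    Submodule.span ℂ (Set.range (mono γ)) = ⊤ := by
  have key : ∀ x ∈ Algebra.adjoin ℂ (Set.range γ),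
      ∀ y ∈ Submodule.span ℂ (Set.range (mono γ)),
        x * y ∈ Submodule.span ℂ (Set.range (mono γ)) := by
    intro x hx
    induction hx using Algebra.adjoin_induction with
    | mem x hx =>
      obtain ⟨i, rfl⟩ := hx
      intro y hy
      induction hy using Submodule.span_induction with
      | mem y hy =>
        obtain ⟨S, rfl⟩ := hy
        obtain ⟨T, hT⟩ := exists_mono h1 h2 (i :: S.toList)
        rw [word_cons] at hT
        change γ i * word γ S.toList ∈ _
        have hm : mono γ T ∈ Submodule.span ℂ (Set.range (mono γ)) :=
          Submodule.subset_span ⟨T, rfl⟩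
        rcases hT with hT | hT <;> rw [hT]
        · exact hm
        · exact Submodule.neg_mem _ hm
      | zero => simp
      | add a b _ _ ha hb => rw [mul_add]; exact Submodule.add_mem _ ha hb
      | smul c a _ ha => rw [mul_smul_comm]; exact Submodule.smul_mem _ _ ha
    | algebraMap r =>
      intro y hy
      rw [← Algebra.smul_def]
      exact Submodule.smul_mem _ _ hy
    | add a b _ _ ha hb =>
      intro y hy
      rw [add_mul]
      exact Submodule.add_mem _ (ha y hy) (hb y hy)
    | mul a b _ _ ha hb =>
      intro y hy
      rw [mul_assoc]
      exact ha _ (hb y hy)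
  rw [eq_top_iff]
  rintro x -
  have h1' : (1 : A) ∈ Submodule.span ℂ (Set.range (mono γ)) :=
    Submodule.subset_span ⟨∅, by simp [mono]⟩
  simpa using key x (hs ▸ Algebra.mem_top) 1 h1'

variable [Fintype ι]

/-- A generator distinguishing two monomials by conjugation, unless their index sets are
equal or complementary. -/
lemma exists_separating {S T : Finset ι} (hST : S ≠ T) (hc : T ≠ Sᶜ) :
    ∃ i, (-1 : ℂ) ^ (S.erase i).card = -(-1 : ℂ) ^ (T.erase i).card := by
  have aux : ∀ (U : Finset ι) (i : ι),
      (-1 : ℂ) ^ (U.erase i).card = (-1) ^ U.card * (if i ∈ U then -1 else 1) := by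
    intro U i
    split_ifs with h
    · rw [← Finset.card_erase_add_one h, pow_succ]; ring
    · rw [Finset.erase_eq_of_notMem h, mul_one]
  -- `i` lies in exactly one of `S`, `T`, whereas `j` lies in both or in neither
  obtain ⟨i, hi⟩ : ∃ i, ¬(i ∈ S ↔ i ∈ T) := by
    by_contra! h
    exact hST (Finset.ext h)
  obtain ⟨j, hj⟩ : ∃ j, (j ∈ S ↔ j ∈ T) := by
    by_contra! h
    exact hc (Finset.ext fun k => by have := h k; rw [Finset.mem_compl]; tauto)
  simp only [aux]
  rcases neg_one_pow_eq_or ℂ S.card with hS | hS <;>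
  rcases neg_one_pow_eq_or ℂ T.card with hT | hT <;> rw [hS, hT]
  · exact ⟨i, by by_cases i ∈ S <;> by_cases i ∈ T <;> simp_all⟩
  · exact ⟨j, by by_cases j ∈ S <;> by_cases j ∈ T <;> simp_all⟩
  · exact ⟨j, by by_cases j ∈ S <;> by_cases j ∈ T <;> simp_all⟩
  · exact ⟨i, by by_cases i ∈ S <;> by_cases i ∈ T <;> simp_all⟩

/-- Multiplying a combination of two complementary monomials by the inverse of one of them
lands in `ℂ 1 + ℂ ω`. -/
lemma exists_central_of_pair (h1 : ∀ i, γ i * γ i = 1)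
    (h2 : ∀ i j, i ≠ j → γ i * γ j = -(γ j * γ i))
    (J : Submodule A A) (S : Finset ι) (a b : ℂ)
    (hJ : a • mono γ S + b • mono γ Sᶜ ∈ J) (h0 : a • mono γ S + b • mono γ Sᶜ ≠ 0) :
    ∃ a b : ℂ, a • (1 : A) + b • mono γ Finset.univ ∈ J ∧
      a • (1 : A) + b • mono γ Finset.univ ≠ 0 := by
  set r := word γ S.toList.reverse with hr
  have hrs : r * mono γ S = 1 := by
    have := word_mul_reverse h1 S.toList.reverse
    rwa [List.reverse_reverse] at this
  have hsr : mono γ S * r = 1 := word_mul_reverse h1 S.toList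
  have hrc : r * mono γ Sᶜ = mono γ Finset.univ ∨ r * mono γ Sᶜ = -mono γ Finset.univ := by
    have hp : (S.toList.reverse ++ Sᶜ.toList).Perm (Finset.univ : Finset ι).toList := by
      rw [← Multiset.coe_eq_coe, ← Multiset.coe_add, Multiset.coe_reverse, Finset.coe_toList,
        Finset.coe_toList, Finset.coe_toList]
      have := Finset.union_compl S
      rw [← Finset.disjUnion_eq_union _ _ disjoint_compl_right] at this
      rw [← this]
      rfl
    have := word_perm h2 hp
    rwa [word_append] at this
  have hm : r * (a • mono γ S + b • mono γ Sᶜ) ∈ J := J.smul_mem r hJ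
  have hm0 : r * (a • mono γ S + b • mono γ Sᶜ) ≠ 0 := fun h => h0 <| by
    have := congrArg (mono γ S * ·) h
    simpa only [← mul_assoc, hsr, one_mul, mul_zero] using this
  rw [mul_add, mul_smul_comm, mul_smul_comm, hrs] at hm hm0
  rcases hrc with h | h <;> rw [h] at hm hm0
  · exact ⟨a, b, hm, hm0⟩
  · exact ⟨a, -b, by simpa using hm, by simpa using hm0⟩

/-- Every nonzero two-sided ideal meets `ℂ 1 + ℂ ω` nontrivially. If an element of the ideal
involves two monomials with distinct and non-complementary index sets, then
`x + γ i * x * γ i` and `x - γ i * x * γ i`, for a separating `i`, lie in the ideal, involve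
fewer monomials, and do not both vanish. -/
lemma exists_central (h1 : ∀ i, γ i * γ i = 1)
    (h2 : ∀ i j, i ≠ j → γ i * γ j = -(γ j * γ i))
    (hs : Algebra.adjoin ℂ (Set.range γ) = ⊤)
    (J : Submodule A A) (hr : ∀ x ∈ J, ∀ a, x * a ∈ J) (hJ : J ≠ ⊥) :
    ∃ a b : ℂ, a • (1 : A) + b • mono γ Finset.univ ∈ J ∧
      a • (1 : A) + b • mono γ Finset.univ ≠ 0 := by
  have key : ∀ (n : ℕ) (c : Finset ι → ℂ), (Finset.univ.filter fun S => c S ≠ 0).card = n →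
      ∑ S, c S • mono γ S ∈ J → ∑ S, c S • mono γ S ≠ 0 →
      ∃ a b : ℂ, a • (1 : A) + b • mono γ Finset.univ ∈ J ∧
        a • (1 : A) + b • mono γ Finset.univ ≠ 0 := by
    intro n
    induction n using Nat.strong_induction_on with
    | _ n ih =>
    intro c hn hx hx0
    obtain ⟨S, -, hS⟩ := Finset.exists_ne_zero_of_sum_ne_zero hx0
    have hcS : c S ≠ 0 := fun h => hS (by simp [h])
    by_cases hT : ∃ T, c T ≠ 0 ∧ S ≠ T ∧ T ≠ Sᶜ
    · obtain ⟨T, hcT, hST, hTc⟩ := hT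
      obtain ⟨i, hi⟩ := exists_separating hST hTc
      set x := ∑ S, c S • mono γ S with hxdef
      have hconj : ∀ ε : ℂ, x + ε • (γ i * x * γ i) =
          ∑ U, (c U * (1 + ε * (-1) ^ (U.erase i).card)) • mono γ U := by
        intro ε
        rw [hxdef, Finset.mul_sum, Finset.sum_mul, Finset.smul_sum, ← Finset.sum_add_distrib]
        refine Finset.sum_congr rfl fun U _ => ?_
        rw [mul_smul_comm, smul_mul_assoc, conj_mono h1 h2, smul_smul, smul_smul, ← add_smul]
        congr 1
        ring
      have hmem : ∀ ε : ℂ, x + ε • (γ i * x * γ i) ∈ J := fun ε =>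
        J.add_mem hx (J.smul_of_tower_mem ε (hr _ (J.smul_mem (γ i) hx) _))
      have step : ∀ (ε : ℂ) (U : Finset ι), c U ≠ 0 → 1 + ε * (-1) ^ (U.erase i).card = 0 →
          x + ε • (γ i * x * γ i) ≠ 0 →
          ∃ a b : ℂ, a • (1 : A) + b • mono γ Finset.univ ∈ J ∧
            a • (1 : A) + b • mono γ Finset.univ ≠ 0 := by
        intro ε U hU hεU hne
        refine ih _ ?_ _ rfl (hconj ε ▸ hmem ε) (hconj ε ▸ hne)
        rw [← hn]
        refine Finset.card_lt_card ⟨fun W hW => ?_, fun h => ?_⟩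
        · simp only [Finset.mem_filter, Finset.mem_univ, true_and] at hW ⊢
          exact left_ne_zero_of_mul hW
        · have := h (Finset.mem_filter.2 ⟨Finset.mem_univ U, hU⟩)
          simp [hεU] at this
      have kill : ∀ ε : ℂ, ε = 1 ∨ ε = -1 → ∃ U, c U ≠ 0 ∧
          1 + ε * (-1) ^ (U.erase i).card = 0 := by
        rintro ε (rfl | rfl) <;>
        rcases neg_one_pow_eq_or ℂ (T.erase i).card with h | h <;> rw [h] at hi
        · exact ⟨S, hcS, by rw [hi]; ring⟩
        · exact ⟨T, hcT, by rw [h]; ring⟩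
        · exact ⟨T, hcT, by rw [h]; ring⟩
        · exact ⟨S, hcS, by rw [hi]; ring⟩
      by_cases hz : x + (1 : ℂ) • (γ i * x * γ i) = 0
      · obtain ⟨U, hU, hU'⟩ := kill (-1) (Or.inr rfl)
        refine step (-1) U hU hU' fun hz' => hx0 ?_
        have h2x : (2 : ℂ) • x = 0 := by
          have := congrArg₂ (· + ·) hz hz'
          simp only [one_smul, neg_smul, add_zero] at this
          rw [two_smul, ← this]
          abel
        exact (smul_eq_zero.1 h2x).resolve_left two_ne_zero
      · obtain ⟨U, hU, hU'⟩ := kill 1 (Or.inl rfl)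
        exact step 1 U hU hU' hz
    · push Not at hT
      by_cases hSc : S = Sᶜ
      · -- only possible when `ι` is empty, where `S = Sᶜ` is the only index
        have hsum : ∑ U, c U • mono γ U = c S • mono γ S + (0 : ℂ) • mono γ Sᶜ := by
          rw [zero_smul, add_zero]
          refine Finset.sum_eq_single S (fun U _ hU => ?_) (by simp)
          by_cases h : c U = 0
          · simp [h]
          · exact absurd ((hT U h hU.symm).trans hSc.symm) hU
        rw [hsum] at hx hx0
        exact exists_central_of_pair h1 h2 J S _ _ hx hx0
      · have hsum : ∑ U, c U • mono γ U = c S • mono γ S + c Sᶜ • mono γ Sᶜ := by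
          rw [← Finset.sum_pair (f := fun U => c U • mono γ U) hSc]
          refine (Finset.sum_subset (Finset.subset_univ _) fun U _ hU => ?_).symm
          simp only [Finset.mem_insert, Finset.mem_singleton, not_or] at hU
          by_cases h : c U = 0
          · simp [h]
          · exact absurd (hT U h (Ne.symm hU.1)) hU.2
        rw [hsum] at hx hx0
        exact exists_central_of_pair h1 h2 J S _ _ hx hx0
  obtain ⟨x, hx, hx0⟩ := J.exists_mem_ne_zero_of_ne_bot hJ
  have hxs : x ∈ Submodule.span ℂ (Set.range (mono γ)) := by
    rw [span_mono h1 h2 hs]; trivial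
  obtain ⟨c, rfl⟩ := (Submodule.mem_span_range_iff_exists_fun ℂ).1 hxs
  exact key _ c rfl hx hx0

end Words

/-! ### Simple modules over an algebra with two central characters -/

section Modules

variable {A : Type*} [Ring A]

/-- A simple left ideal and a simple module on which the central involution `w` acts by `1`
are isomorphic. The annihilator of the module meets the block `A (1 + w)` in a two-sided ideal
which does not contain `1 + w`, hence is zero; so the left ideal does not annihilate the
module. -/
lemma nonempty_equiv_of_sign [Algebra ℂ A] {w : A} (hc : ∀ a, w * a = a * w) (hw : w * w = 1) (hw1 : w ≠ 1)
    (key : ∀ J : Submodule A A, (∀ x ∈ J, ∀ a, x * a ∈ J) → J ≠ ⊥ →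
      ∃ a b : ℂ, a • (1 : A) + b • w ∈ J ∧ a • (1 : A) + b • w ≠ 0)
    (I : Submodule A A) [IsSimpleModule A I] (hI : ∀ x ∈ I, w * x = x)
    (M : Type*) [AddCommGroup M] [Module A M] [IsSimpleModule A M] (hM : ∀ m : M, w • m = m) :
    Nonempty (M ≃ₗ[A] I) := by
  let J : Submodule A A :=
    { carrier := {a | w * a = a ∧ ∀ m : M, a • m = 0}
      add_mem' := fun {a b} ha hb => ⟨by rw [mul_add, ha.1, hb.1], fun m => by
        rw [add_smul, ha.2, hb.2, add_zero]⟩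
      zero_mem' := ⟨mul_zero _, fun m => zero_smul _ _⟩
      smul_mem' := fun c a ha => ⟨by
        rw [smul_eq_mul, ← mul_assoc, hc, mul_assoc, ha.1], fun m => by
        rw [smul_eq_mul, mul_smul, ha.2, smul_zero]⟩ }
  have hJ : J = ⊥ := by
    by_contra hJ
    obtain ⟨a, b, hab, h0⟩ := key J (fun x hx a => ⟨by rw [← mul_assoc, hx.1], fun m => by
      rw [mul_smul, hx.2]⟩) hJ
    obtain ⟨hwab, hM0⟩ := hab
    -- `w z = z` for `z = a + b w` forces `a = b`, since `w ≠ 1`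
    have hab' : a = b := by
      have h : (a - b) • (w - 1) = 0 := by
        rw [mul_add, mul_smul_comm, mul_smul_comm, hw, mul_one] at hwab
        rw [sub_smul, smul_sub, smul_sub, sub_sub_sub_comm, sub_sub_sub_comm]
        have := sub_eq_zero.2 hwab
        rw [← this]
        abel
      rcases smul_eq_zero.1 h with h | h
      · exact sub_eq_zero.1 h
      · exact absurd (sub_eq_zero.1 h) hw1
    subst hab'
    have ha : a ≠ 0 := by rintro rfl; simp at h0
    obtain ⟨m, hm⟩ := @exists_ne M (IsSimpleModule.nontrivial A M) 0
    have h2 : (algebraMap ℂ A (a⁻¹ * 2⁻¹)) • ((a • (1 : A) + a • w) • m) = m := by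
      rw [← smul_add, Algebra.smul_def a, mul_smul, add_smul, hM, one_smul, smul_smul,
        ← map_mul, ← two_smul A m, smul_smul]
      have : algebraMap ℂ A (a⁻¹ * 2⁻¹ * a) * 2 = 1 := by
        rw [← map_ofNat (algebraMap ℂ A) 2, ← map_mul, ← map_one (algebraMap ℂ A)]
        congr 1
        field_simp
      rw [this, one_smul]
    rw [hM0, smul_zero] at h2
    exact hm h2.symm
  obtain ⟨⟨x, hxI⟩, hx⟩ := @exists_ne I (IsSimpleModule.nontrivial A I) 0
  have hx0 : x ≠ 0 := fun h => hx (Subtype.ext h)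
  obtain ⟨m, hm⟩ : ∃ m : M, x • m ≠ 0 := by
    by_contra! h
    have : x ∈ J := ⟨hI x hxI, h⟩
    rw [hJ] at this
    exact hx0 this
  let f : I →ₗ[A] M := (LinearMap.toSpanSingleton A M m).comp I.subtype
  have hf : f ≠ 0 := fun h => hm (by simpa [f] using LinearMap.congr_fun h ⟨x, hxI⟩)
  exact ⟨(LinearEquiv.ofBijective f (LinearMap.bijective_of_ne_zero hf)).symm⟩

/-- A central involution acts by a sign on a simple module. -/
lemma sign_of_simple {w : A} (hc : ∀ a, w * a = a * w) (hw : w * w = 1)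
    (M : Type*) [AddCommGroup M] [Module A M] [IsSimpleModule A M] :
    (∀ m : M, w • m = m) ∨ (∀ m : M, (-w) • m = m) := by
  let K : Submodule A M :=
    { carrier := {m | w • m = m}
      add_mem' := fun {a b} ha hb => by
        change w • (a + b) = a + b
        rw [smul_add, ha, hb]
      zero_mem' := smul_zero _
      smul_mem' := fun c a ha => by
        change w • c • a = c • a
        rw [smul_smul, hc, mul_smul, ha] }
  rcases eq_bot_or_eq_top K with h | h
  · right
    intro m
    have : m + w • m ∈ K := by
      change w • (m + w • m) = _
      rw [smul_add, smul_smul, hw, one_smul, add_comm]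
    rw [h, Submodule.mem_bot] at this
    rw [neg_smul]
    exact (eq_neg_of_add_eq_zero_left this).symm
  · left
    intro m
    have : m ∈ K := h ▸ Submodule.mem_top
    exact this

lemma exists_simple_ideal [IsArtinian A A] {w : A} (hc : ∀ a, w * a = a * w) (hw : w * w = 1)
    (hw1 : w ≠ -1) :
    ∃ I : Submodule A A, IsSimpleModule A I ∧ ∀ x ∈ I, w * x = x := by
  let K : Submodule A A :=
    { carrier := {m | w * m = m}
      add_mem' := fun {a b} ha hb => by
        change w * (a + b) = a + b
        rw [mul_add, ha, hb]
      zero_mem' := mul_zero _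
      smul_mem' := fun c a ha => by
        change w * (c * a) = c * a
        rw [← mul_assoc, hc, mul_assoc, ha] }
  have hK : K ≠ ⊥ := fun h => hw1 <| by
    have : w + 1 ∈ K := by
      change w * (w + 1) = _
      rw [mul_add, hw, mul_one, add_comm]
    rw [h, Submodule.mem_bot] at this
    exact eq_neg_of_add_eq_zero_left this
  have : IsAtomic (Submodule A A) := isAtomic_of_orderBot_wellFounded_lt wellFounded_lt
  obtain ⟨I, hI, hIK⟩ := (eq_bot_or_exists_atom_le K).resolve_left hK
  exact ⟨I, isSimpleModule_iff_isAtom.2 hI, fun x hx => hIK hx⟩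

/-- The classification of simple modules over an artinian algebra in which every nonzero
two-sided ideal meets `ℂ 1 + ℂ w`, with `w` a central involution other than `1` and `-1`. -/
lemma two_simple_of_central [Algebra ℂ A] [IsArtinian A A] {w : A} (hc : ∀ a, w * a = a * w)
    (hw : w * w = 1) (hw1 : w ≠ 1) (hw1' : w ≠ -1)
    (key : ∀ J : Submodule A A, (∀ x ∈ J, ∀ a, x * a ∈ J) → J ≠ ⊥ →
      ∃ a b : ℂ, a • (1 : A) + b • w ∈ J ∧ a • (1 : A) + b • w ≠ 0) :
    ∃ I₁ I₂ : Submodule A A, IsSimpleModule A I₁ ∧ IsSimpleModule A I₂ ∧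
      IsEmpty (I₁ ≃ₗ[A] I₂) ∧
      ∀ (M : Type) [AddCommGroup M] [Module A M], IsSimpleModule A M →
        Nonempty (M ≃ₗ[A] I₁) ∨ Nonempty (M ≃ₗ[A] I₂) := by
  have hc' : ∀ a, -w * a = a * -w := fun a => by rw [neg_mul, mul_neg, hc]
  have hw' : -w * -w = 1 := by rw [neg_mul_neg, hw]
  obtain ⟨I₁, hs₁, hI₁⟩ := exists_simple_ideal hc hw hw1'
  obtain ⟨I₂, hs₂, hI₂⟩ := exists_simple_ideal hc' hw' (fun h => hw1 (neg_injective h))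
  refine ⟨I₁, I₂, hs₁, hs₂, ⟨fun e => ?_⟩, fun M _ _ hM => ?_⟩
  · obtain ⟨x, hx⟩ := @exists_ne I₁ (IsSimpleModule.nontrivial A I₁) 0
    have h1 : w • x = x := Subtype.ext (hI₁ x x.2)
    have h2 : w • e x = -e x := by
      have : (-w) • e x = e x := Subtype.ext (hI₂ (e x) (e x).2)
      rw [neg_smul] at this
      exact (neg_eq_iff_eq_neg.1 this)
    rw [← map_smul, h1] at h2
    have h3 : (2 : ℂ) • (e x : A) = 0 := by
      rw [two_smul]
      exact add_eq_zero_iff_eq_neg.2 (congrArg Subtype.val h2)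
    have h4 : e x = 0 := Subtype.ext ((smul_eq_zero.1 h3).resolve_left two_ne_zero)
    exact hx (e.map_eq_zero_iff.1 h4)
  · rcases sign_of_simple hc hw M with h | h
    · exact Or.inl (nonempty_equiv_of_sign hc hw hw1 key I₁ hI₁ M h)
    · refine Or.inr (nonempty_equiv_of_sign hc' hw' (fun h => hw1' ?_) ?_ I₂ hI₂ M h)
      · rw [← h, neg_neg]
      · intro J hr hJ
        obtain ⟨a, b, h⟩ := key J hr hJ
        exact ⟨a, -b, by simpa using h⟩

end Modules

/-! ### Algebras generated by an odd number of anticommuting square roots of one -/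

lemma two_simple_of_generators {ι A : Type*} [Ring A] [Algebra ℂ A] [Nontrivial A] [Fintype ι]
    {γ : ι → A} (h1 : ∀ i, γ i * γ i = 1) (h2 : ∀ i j, i ≠ j → γ i * γ j = -(γ j * γ i))
    (hs : Algebra.adjoin ℂ (Set.range γ) = ⊤) (hodd : Odd (Fintype.card ι))
    (α : A →ₐ[ℂ] A) (hα : ∀ i, α (γ i) = -γ i) :
    ∃ I₁ I₂ : Submodule A A, IsSimpleModule A I₁ ∧ IsSimpleModule A I₂ ∧
      IsEmpty (I₁ ≃ₗ[A] I₂) ∧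
      ∀ (M : Type) [AddCommGroup M] [Module A M], IsSimpleModule A M →
        Nonempty (M ≃ₗ[A] I₁) ∨ Nonempty (M ≃ₗ[A] I₂) := by
  classical
  have : Module.Finite ℂ A :=
    ⟨Submodule.fg_def.2 ⟨_, Set.finite_range _, span_mono h1 h2 hs⟩⟩
  have : IsArtinian A A := isArtinian_of_tower ℂ inferInstance
  set ω := mono γ Finset.univ with hω
  have hgen : ∀ i, ω * γ i = γ i * ω := by
    intro i
    have h := conj_mono h1 h2 i Finset.univ
    have he : Even (Finset.univ.erase i).card := by
      rw [Finset.card_erase_of_mem (Finset.mem_univ i), Finset.card_univ]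
      exact hodd.tsub_odd odd_one
    rw [he.neg_one_pow, one_smul, ← hω] at h
    calc ω * γ i = γ i * γ i * ω * γ i := by rw [h1, one_mul]
      _ = γ i * ω := by rw [mul_assoc (γ i) (γ i), mul_assoc (γ i), h]
  have hc : ∀ a, ω * a = a * ω := by
    intro a
    have ha : a ∈ Algebra.adjoin ℂ (Set.range γ) := hs ▸ Algebra.mem_top
    induction ha using Algebra.adjoin_induction with
    | mem x hx => obtain ⟨i, rfl⟩ := hx; exact hgen i
    | algebraMap r => exact (Algebra.commutes r ω).symm
    | add a b _ _ ha hb => rw [mul_add, add_mul, ha, hb]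
    | mul a b _ _ ha hb => rw [← mul_assoc, ha, mul_assoc, hb, mul_assoc]
  have hαω : α ω = -ω := by
    have : ∀ l : List ι, α (word γ l) = (-1) ^ l.length * word γ l := by
      intro l
      induction l with
      | nil => simp
      | cons i l ih =>
        rw [word_cons, map_mul, hα, ih, List.length_cons, pow_succ]
        rcases neg_one_pow_eq_or A l.length with h | h <;> rw [h] <;> simp
    rw [hω, mono, this, Finset.length_toList, Finset.card_univ, hodd.neg_one_pow, neg_one_mul]
  have hsq : ω * ω = 1 ∨ ω * ω = -1 := by
    have h := word_mul_reverse h1 (Finset.univ : Finset ι).toList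
    rcases word_perm h2 (List.reverse_perm (Finset.univ : Finset ι).toList) with h' | h' <;>
      rw [h'] at h
    · exact Or.inl h
    · right
      rw [mul_neg] at h
      exact neg_eq_iff_eq_neg.1 h
  obtain ⟨t, ht0, ht⟩ : ∃ t : ℂ, t ≠ 0 ∧ (t • ω) * (t • ω) = 1 := by
    rcases hsq with h | h
    · exact ⟨1, one_ne_zero, by simpa using h⟩
    · refine ⟨Complex.I, Complex.I_ne_zero, ?_⟩
      rw [smul_mul_smul_comm, h, Complex.I_mul_I]
      simp
  -- `α` sends `t • ω` to its negative, so it is not a scalar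
  have hne : ∀ z : ℂ, z ≠ 0 → t • ω ≠ z • (1 : A) := by
    intro z hz h
    have h' := congrArg α h
    rw [map_smul, map_smul, hαω, map_one, smul_neg, h, neg_eq_iff_add_eq_zero, ← add_smul,
      smul_eq_zero] at h'
    rcases h' with h' | h'
    · exact hz (by linear_combination h' / 2)
    · exact one_ne_zero h'
  refine two_simple_of_central (w := t • ω) (fun a => ?_) ht ?_ ?_ fun J hr hJ => ?_
  · rw [smul_mul_assoc, hc, mul_smul_comm]
  · simpa using hne 1 one_ne_zero
  · simpa using hne (-1) (by simp)
  · obtain ⟨a, b, h⟩ := exists_central h1 h2 hs J hr hJ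
    refine ⟨a, b * t⁻¹, ?_⟩
    rwa [smul_smul, mul_assoc, inv_mul_cancel₀ ht0, mul_one]

end OddClifford

/-- The complexified Clifford algebra of a nondegenerate quadratic form of odd rank
has exactly two inequivalent irreducible representations: there are two
non-isomorphic simple left modules (realized as simple left ideals), and every
simple module is isomorphic to one of them. -/
theorem two_simple_modules_of_odd_rank
    (V : Type*) [AddCommGroup V] [Module ℝ V] [FiniteDimensional ℝ V]
    (Q : QuadraticForm ℝ V)
    (hQ : (QuadraticMap.polarBilin Q).Nondegenerate)
    (hdim : Odd (Module.finrank ℝ V)) :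
    ∃ I₁ I₂ : Submodule (ℂ ⊗[ℝ] CliffordAlgebra Q) (ℂ ⊗[ℝ] CliffordAlgebra Q),
      IsSimpleModule (ℂ ⊗[ℝ] CliffordAlgebra Q) I₁ ∧
      IsSimpleModule (ℂ ⊗[ℝ] CliffordAlgebra Q) I₂ ∧
      IsEmpty (I₁ ≃ₗ[ℂ ⊗[ℝ] CliffordAlgebra Q] I₂) ∧
      ∀ (M : Type) [AddCommGroup M] [Module (ℂ ⊗[ℝ] CliffordAlgebra Q) M],
        IsSimpleModule (ℂ ⊗[ℝ] CliffordAlgebra Q) M →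
          Nonempty (M ≃ₗ[ℂ ⊗[ℝ] CliffordAlgebra Q] I₁) ∨
          Nonempty (M ≃ₗ[ℂ ⊗[ℝ] CliffordAlgebra Q] I₂) := by
  have hsymm : (QuadraticMap.polarBilin Q).IsSymm :=
    ⟨fun x y => QuadraticMap.polar_comm Q x y⟩
  obtain ⟨v, hv⟩ := LinearMap.BilinForm.exists_orthogonal_basis hsymm
  have hv' := hv.not_isOrtho_basis_self_of_separatingLeft hQ.1
  have hQv : ∀ i, Q (v i) ≠ 0 := fun i h => hv' i (by
    change QuadraticMap.polar Q (v i) (v i) = 0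
    rw [QuadraticMap.polar_self, h, smul_zero])
  have hort : ∀ i j, i ≠ j → Q.IsOrtho (v i) (v j) := fun i j hij => by
    rw [← QuadraticMap.isOrtho_polarBilin]
    exact hv hij
  -- a complex square root of `1 / Q (v i)` normalizes the generator to square `1`
  have hz : ∀ i, ∃ z : ℂ, z * z * (Q (v i) : ℂ) = 1 := fun i => by
    obtain ⟨z, hz⟩ := IsAlgClosed.exists_pow_nat_eq ((Q (v i) : ℂ)⁻¹) (n := 2) (by norm_num)
    refine ⟨z, ?_⟩
    rw [← sq, hz]
    exact inv_mul_cancel₀ (by exact_mod_cast hQv i)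
  choose z hz using hz
  have hz0 : ∀ i, z i ≠ 0 := fun i h => by simpa [h] using hz i
  let γ : Fin (Module.finrank ℝ V) → ℂ ⊗[ℝ] CliffordAlgebra Q := fun i => z i ⊗ₜ ι Q (v i)
  have hadj : Algebra.adjoin ℂ (Set.range γ) = ⊤ := by
    set W := Algebra.adjoin ℂ (Set.range γ) with hW
    have hι : ∀ x : V, (1 : ℂ) ⊗ₜ[ℝ] ι Q x ∈ W := by
      intro x
      have hx : x ∈ Submodule.span ℝ (Set.range v) := v.mem_span x
      induction hx using Submodule.span_induction with
      | mem x hx =>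
        obtain ⟨i, rfl⟩ := hx
        have h : (z i)⁻¹ • γ i ∈ W := W.smul_mem (Algebra.subset_adjoin ⟨i, rfl⟩) _
        simpa [γ, TensorProduct.smul_tmul', hz0 i] using h
      | zero => simp
      | add a b _ _ ha hb => rw [map_add, tmul_add]; exact W.add_mem ha hb
      | smul c a _ ha =>
        have h := W.smul_mem ha (c : ℂ)
        rw [map_smul, tmul_smul]
        simpa [TensorProduct.smul_tmul'] using h
    have hcl : ∀ x : CliffordAlgebra Q, (1 : ℂ) ⊗ₜ[ℝ] x ∈ W := by
      intro x
      induction x using CliffordAlgebra.induction with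
      | algebraMap r =>
        have h := W.algebraMap_mem (r : ℂ)
        rw [Algebra.algebraMap_eq_smul_one, tmul_smul, TensorProduct.smul_tmul']
        simpa [Algebra.TensorProduct.algebraMap_apply, TensorProduct.smul_tmul'] using h
      | ι x => exact hι x
      | mul a b ha hb =>
        have h := W.mul_mem ha hb
        rwa [Algebra.TensorProduct.tmul_mul_tmul, one_mul] at h
      | add a b ha hb => rw [tmul_add]; exact W.add_mem ha hb
    rw [eq_top_iff]
    rintro x -
    induction x using TensorProduct.induction_on with
    | zero => exact W.zero_mem
    | tmul c x =>
      have h := W.smul_mem (hcl x) c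
      rwa [TensorProduct.smul_tmul', smul_eq_mul, mul_one] at h
    | add a b ha hb => exact W.add_mem ha hb
  have : Nontrivial (ℂ ⊗[ℝ] CliffordAlgebra Q) := inferInstance
  refine OddClifford.two_simple_of_generators (γ := γ) (fun i => ?_) (fun i j hij => ?_) hadj
    (by simpa using hdim)
    (Algebra.TensorProduct.map (AlgHom.id ℂ ℂ) (involute (Q := Q))) (fun i => ?_)
  · rw [Algebra.TensorProduct.tmul_mul_tmul, ι_sq_scalar, Algebra.algebraMap_eq_smul_one,
      ← TensorProduct.smul_tmul, Algebra.TensorProduct.one_def]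
    congr 1
    rw [← hz i, Complex.real_smul, mul_comm]
  · simp only [γ]
    rw [Algebra.TensorProduct.tmul_mul_tmul, Algebra.TensorProduct.tmul_mul_tmul,
      ι_mul_ι_comm_of_isOrtho (hort i j hij), tmul_neg, mul_comm]
  · simp [γ, tmul_neg]
end
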